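/- arXiv:math-ph/0005013 — 12 statements merged into one kernel-verified Lean document; each statement's English description precedes it below -/
import Mathlib

section
/- The three vector fields Q₁(t,x,u) = (0, 1, 0), Q₂(t,x,u) = (0, tan u · sin x, cos x), Q₃(t,x,u) = (0, tan u · cos x, −sin x) on ℝ³ satisfy the so(3) commutation relations at every point p = (t,x,u) with cos u ≠ 0: [Q₁,Q₂](p) = Q₃(p), [Q₁,Q₃](p) = −Q₂(p), and [Q₂,Q₃](p) = Q₁(p). -/
/-- Pointwise Lie bracket of vector fields on ℝ³:
`[V,W](p) = DW(p)(V(p)) − DV(p)(W(p))`. -/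
noncomputable def lieBracket (V W : ℝ × ℝ × ℝ → ℝ × ℝ × ℝ) (p : ℝ × ℝ × ℝ) :
    ℝ × ℝ × ℝ :=
  fderiv ℝ W p (V p) - fderiv ℝ V p (W p)

/-- Derivative of a vector field of the form `tan u · f(x) ∂x + g(x) ∂u`. -/
theorem fderiv_tan_mul_field {f g : ℝ → ℝ} {f' g' : ℝ} {p : ℝ × ℝ × ℝ}
    (hf : HasDerivAt f f' p.2.1) (hg : HasDerivAt g g' p.2.1)
    (hp : Real.cos p.2.2 ≠ 0) (v : ℝ × ℝ × ℝ) :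
    fderiv ℝ (fun q : ℝ × ℝ × ℝ => ((0 : ℝ), Real.tan q.2.2 * f q.2.1, g q.2.1)) p v =
      (0, Real.tan p.2.2 * (f' * v.2.1) + f p.2.1 * (1 / Real.cos p.2.2 ^ 2 * v.2.2),
        g' * v.2.1) := by
  have hsnd : HasFDerivAt Prod.snd (ContinuousLinearMap.snd ℝ ℝ (ℝ × ℝ)) p := hasFDerivAt_snd
  have hx := hsnd.fst
  have hu := hsnd.snd
  have htan := (Real.hasDerivAt_tan hp).comp_hasFDerivAt p hu
  have h := (hasFDerivAt_const (0 : ℝ) p).prodMk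
    ((htan.mul (hf.comp_hasFDerivAt p hx)).prodMk (hg.comp_hasFDerivAt p hx))
  exact congrArg (fun L => L v) h.fderiv

/-- The realization of so(3):
`Q₁ = ∂x`, `Q₂ = tan u sin x ∂x + cos x ∂u`, `Q₃ = tan u cos x ∂x − sin x ∂u`
(coordinates `(t,x,u)`). -/
theorem so3_commutation_relations
    (Q₁ Q₂ Q₃ : ℝ × ℝ × ℝ → ℝ × ℝ × ℝ)
    (hQ₁ : ∀ p : ℝ × ℝ × ℝ, Q₁ p = (0, 1, 0))
    (hQ₂ : ∀ p : ℝ × ℝ × ℝ,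
      Q₂ p = (0, Real.tan p.2.2 * Real.sin p.2.1, Real.cos p.2.1))
    (hQ₃ : ∀ p : ℝ × ℝ × ℝ,
      Q₃ p = (0, Real.tan p.2.2 * Real.cos p.2.1, -Real.sin p.2.1)) :
    ∀ p : ℝ × ℝ × ℝ, Real.cos p.2.2 ≠ 0 →
      lieBracket Q₁ Q₂ p = Q₃ p ∧
      lieBracket Q₁ Q₃ p = -(Q₂ p) ∧
      lieBracket Q₂ Q₃ p = Q₁ p := by
  intro p hp
  obtain rfl : Q₁ = fun _ => (0, 1, 0) := funext hQ₁
  obtain rfl : Q₂ = _ := funext hQ₂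
  obtain rfl : Q₃ = _ := funext hQ₃
  have hsin := Real.hasDerivAt_sin p.2.1
  have hcos := Real.hasDerivAt_cos p.2.1
  have h₂ := fderiv_tan_mul_field hsin hcos hp
  have h₃ := fderiv_tan_mul_field hcos hsin.neg hp
  simp only [Pi.neg_apply] at h₃
  have hsq := Real.sin_sq_add_cos_sq p.2.1
  have htan : 1 / Real.cos p.2.2 ^ 2 = 1 + Real.tan p.2.2 ^ 2 := by
    rw [← Real.inv_one_add_tan_sq hp, one_div, inv_inv]
  refine ⟨?_, ?_, ?_⟩
  · simp [lieBracket, h₂]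
  · simp [lieBracket, h₃]
  · simp only [lieBracket, h₂, h₃, htan, Prod.mk_sub_mk, Prod.mk.injEq]
    refine ⟨by ring, ?_, by ring⟩
    linear_combination hsq
end

section
/- The three vector fields Q₁(t,x,u) = (0, 2x, −u), Q₂(t,x,u) = (0, u⁻⁴ − x², x·u), Q₃(t,x,u) = (0, 1, 0) satisfy the sl(2,ℝ) commutation relations at every point p = (t,x,u) with u ≠ 0: [Q₁,Q₂](p) = 2·Q₂(p), [Q₁,Q₃](p) = −2·Q₃(p), and [Q₂,Q₃](p) = Q₁(p). -/
/-- Derivative of `(0, 2x, -u)`. -/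
theorem fderiv_scaling_apply (p v : ℝ × ℝ × ℝ) :
    fderiv ℝ (fun p : ℝ × ℝ × ℝ => ((0 : ℝ), 2 * p.2.1, -p.2.2)) p v =
      (0, 2 * v.2.1, -v.2.2) := by
  have hx : HasFDerivAt (fun q : ℝ × ℝ × ℝ => q.2.1)
      (.comp (.fst ℝ ℝ ℝ) (.snd ℝ ℝ (ℝ × ℝ))) p :=
    (ContinuousLinearMap.comp (.fst ℝ ℝ ℝ) (.snd ℝ ℝ (ℝ × ℝ))).hasFDerivAt
  have hu : HasFDerivAt (fun q : ℝ × ℝ × ℝ => q.2.2)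
      (.comp (.snd ℝ ℝ ℝ) (.snd ℝ ℝ (ℝ × ℝ))) p :=
    (ContinuousLinearMap.comp (.snd ℝ ℝ ℝ) (.snd ℝ ℝ (ℝ × ℝ))).hasFDerivAt
  have h := (hasFDerivAt_const (0 : ℝ) p).prodMk ((hx.const_mul 2).prodMk hu.fun_neg)
  rw [h.fderiv]
  simp

/-- Derivative of `(0, u⁻⁴ - x², xu)` at a point with `u ≠ 0`. -/
theorem fderiv_projective_apply (p v : ℝ × ℝ × ℝ) (hp : p.2.2 ≠ 0) :
    fderiv ℝ (fun p : ℝ × ℝ × ℝ =>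
        ((0 : ℝ), p.2.2 ^ (-4 : ℤ) - p.2.1 ^ 2, p.2.1 * p.2.2)) p v =
      (0, -4 * p.2.2 ^ (-5 : ℤ) * v.2.2 - 2 * p.2.1 * v.2.1,
        p.2.1 * v.2.2 + p.2.2 * v.2.1) := by
  have hx : HasFDerivAt (fun q : ℝ × ℝ × ℝ => q.2.1)
      (.comp (.fst ℝ ℝ ℝ) (.snd ℝ ℝ (ℝ × ℝ))) p :=
    (ContinuousLinearMap.comp (.fst ℝ ℝ ℝ) (.snd ℝ ℝ (ℝ × ℝ))).hasFDerivAt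
  have hu : HasFDerivAt (fun q : ℝ × ℝ × ℝ => q.2.2)
      (.comp (.snd ℝ ℝ ℝ) (.snd ℝ ℝ (ℝ × ℝ))) p :=
    (ContinuousLinearMap.comp (.snd ℝ ℝ ℝ) (.snd ℝ ℝ (ℝ × ℝ))).hasFDerivAt
  have hz := (hasDerivAt_zpow (-4) p.2.2 (Or.inl hp)).comp_hasFDerivAt p hu
  have h := (hasFDerivAt_const (0 : ℝ) p).prodMk ((hz.sub (hx.pow 2)).prodMk (hx.mul hu))
  refine (congrArg (· v) h.fderiv).trans ?_
  norm_num

/-- The realization of sl(2,ℝ):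
`Q₁ = 2x∂x − u∂u`, `Q₂ = (u⁻⁴ − x²)∂x + xu∂u`, `Q₃ = ∂x`
(coordinates `(t,x,u)`), valid where `u ≠ 0`. -/
theorem sl2_commutation_relations_realization_n23
    (Q₁ Q₂ Q₃ : ℝ × ℝ × ℝ → ℝ × ℝ × ℝ)
    (hQ₁ : ∀ p : ℝ × ℝ × ℝ, Q₁ p = (0, 2 * p.2.1, -p.2.2))
    (hQ₂ : ∀ p : ℝ × ℝ × ℝ,
      Q₂ p = (0, p.2.2 ^ (-4 : ℤ) - p.2.1 ^ 2, p.2.1 * p.2.2))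
    (hQ₃ : ∀ p : ℝ × ℝ × ℝ, Q₃ p = (0, 1, 0)) :
    ∀ p : ℝ × ℝ × ℝ, p.2.2 ≠ 0 →
      lieBracket Q₁ Q₂ p = (2 : ℝ) • Q₂ p ∧
      lieBracket Q₁ Q₃ p = (-2 : ℝ) • Q₃ p ∧
      lieBracket Q₂ Q₃ p = Q₁ p := by
  obtain rfl : Q₁ = _ := funext hQ₁
  obtain rfl : Q₂ = _ := funext hQ₂
  obtain rfl : Q₃ = _ := funext hQ₃
  intro p hp
  have hpow : p.2.2 ^ (-5 : ℤ) * p.2.2 = p.2.2 ^ (-4 : ℤ) := by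
    rw [← zpow_add_one₀ hp]
    norm_num
  simp only [lieBracket, fderiv_scaling_apply, fderiv_projective_apply _ _ hp,
    fderiv_fun_const, Pi.zero_apply, zero_apply]
  refine ⟨?_, by simp, by simp⟩
  ext
  · simp
  · simp only [Prod.snd_sub, Prod.fst_sub, Prod.smul_snd, Prod.smul_fst, smul_eq_mul]
    linear_combination 4 * hpow
  · simp only [Prod.snd_sub, Prod.smul_snd, smul_eq_mul]
    ring
end

section
/- The three vector fields Q₁(t,x,u) = (0, 2x, −u), Q₂(t,x,u) = (0, −(u⁻⁴ + x²), x·u), Q₃(t,x,u) = (0, 1, 0) satisfy the sl(2,ℝ) commutation relations at every point p = (t,x,u) with u ≠ 0: [Q₁,Q₂](p) = 2·Q₂(p), [Q₁,Q₃](p) = −2·Q₃(p), and [Q₂,Q₃](p) = Q₁(p). -/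
/-- The realization of sl(2,ℝ):
`Q₁ = 2x∂x − u∂u`, `Q₂ = −(u⁻⁴ + x²)∂x + xu∂u`, `Q₃ = ∂x`
(coordinates `(t,x,u)`), valid where `u ≠ 0`. -/
theorem sl2_commutation_relations_realization_n24
    (Q₁ Q₂ Q₃ : ℝ × ℝ × ℝ → ℝ × ℝ × ℝ)
    (hQ₁ : ∀ p : ℝ × ℝ × ℝ, Q₁ p = (0, 2 * p.2.1, -p.2.2))
    (hQ₂ : ∀ p : ℝ × ℝ × ℝ,
      Q₂ p = (0, -(p.2.2 ^ (-4 : ℤ) + p.2.1 ^ 2), p.2.1 * p.2.2))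
    (hQ₃ : ∀ p : ℝ × ℝ × ℝ, Q₃ p = (0, 1, 0)) :
    ∀ p : ℝ × ℝ × ℝ, p.2.2 ≠ 0 →
      lieBracket Q₁ Q₂ p = (2 : ℝ) • Q₂ p ∧
      lieBracket Q₁ Q₃ p = (-2 : ℝ) • Q₃ p ∧
      lieBracket Q₂ Q₃ p = Q₁ p := by
  intro p hu
  have hx : HasFDerivAt (fun q : ℝ × ℝ × ℝ => q.2.1) _ p :=
    (hasFDerivAt_snd (𝕜 := ℝ) (p := p)).fst
  have hv : HasFDerivAt (fun q : ℝ × ℝ × ℝ => q.2.2) _ p :=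
    (hasFDerivAt_snd (𝕜 := ℝ) (p := p)).snd
  have hz : HasFDerivAt (fun _ : ℝ × ℝ × ℝ => (0 : ℝ)) (0 : ℝ × ℝ × ℝ →L[ℝ] ℝ) p :=
    hasFDerivAt_const 0 p
  have d₁ := (hz.prodMk ((hx.const_mul 2).prodMk hv.neg)).fderiv
  have d₂ := (hz.prodMk
    ((((hasDerivAt_zpow (-4) p.2.2 (Or.inl hu)).comp_hasFDerivAt p hv).add
      (hx.pow 2)).neg.prodMk (hx.mul hv))).fderiv
  have e₁ : Q₁ = fun q => (0, 2 * q.2.1, -q.2.2) := funext hQ₁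
  have e₂ : Q₂ = fun q => (0, -(q.2.2 ^ (-4 : ℤ) + q.2.1 ^ 2), q.2.1 * q.2.2) := funext hQ₂
  have e₃ : Q₃ = fun _ => (0, 1, 0) := funext hQ₃
  replace d₁ : fderiv ℝ Q₁ p = _ := e₁ ▸ d₁
  replace d₂ : fderiv ℝ Q₂ p = _ := e₂ ▸ d₂
  have d₃ : fderiv ℝ Q₃ p = 0 := by rw [e₃, fderiv_fun_const]; rfl
  have hpow : p.2.2 ^ (-4 : ℤ) = p.2.2 ^ (-5 : ℤ) * p.2.2 := by
    rw [← zpow_add_one₀ hu]; norm_num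
  simp only [lieBracket, d₁, d₂, d₃, hQ₁, hQ₂, hQ₃]
  refine ⟨?_, ?_, ?_⟩ <;> ext <;> simp [-zpow_neg, -Int.reduceNeg]
  · rw [hpow]; ring
  all_goals ring
end

section
/- Let a : ℝ → ℝ and b, c : ℝ³ → ℝ be C^∞ functions, let p₀ = (t₀,x₀,u₀) ∈ ℝ³, and suppose a(t₀) ≠ 0. Consider the vector field Q(t,x,u) = (a(t), b(t,x,u), c(t,x,u)). Then there exist an open neighborhood Ω of p₀ and C^∞ real-valued functions T (depending on t only), X, U defined on Ω such that on Ω one has T'(t) ≠ 0 and ∂X/∂x · ∂U/∂u − ∂X/∂u · ∂U/∂x ≠ 0, and the map Φ(t,x,u) = (T(t), X(t,x,u), U(t,x,u)) straightens Q: at every point p ∈ Ω, DΦ(p)(Q(p)) = (1,0,0); equivalently, a(t)·T'(t) = 1, a·∂X/∂t + b·∂X/∂x + c·∂X/∂u = 0, and a·∂U/∂t + b·∂U/∂x + c·∂U/∂u = 0 hold on Ω. -/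
open Set
open scoped ContDiff unitInterval

section Superposition

universe u

variable {K : Type*} [TopologicalSpace K] [CompactSpace K]
  {E F : Type u} [NormedAddCommGroup E] [NormedSpace ℝ E] [NormedAddCommGroup F] [NormedSpace ℝ F]

/-- Pointwise evaluation of a continuous family of operators on a continuous family of vectors. -/
noncomputable def ContinuousMap.pointwiseApply :
    C(K, E →L[ℝ] F) →L[ℝ] C(K, E) →L[ℝ] C(K, F) :=
  LinearMap.mkContinuous₂
    (LinearMap.mk₂ ℝ (fun (A : C(K, E →L[ℝ] F)) (h : C(K, E)) =>
      (⟨fun k => A k (h k), by fun_prop⟩ : C(K, F)))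
      (fun _ _ _ => by ext; simp) (fun _ _ _ => by ext; simp)
      (fun _ _ _ => by ext; simp) (fun _ _ _ => by ext; simp)) 1
    (fun A h => by
      rw [one_mul]
      refine (ContinuousMap.norm_le _ (by positivity)).2 fun k => ?_
      exact ((A k).le_opNorm _).trans
        (mul_le_mul (A.norm_coe_le_norm k) (h.norm_coe_le_norm k) (norm_nonneg _) (by positivity)))

@[simp]
theorem ContinuousMap.pointwiseApply_apply (A : C(K, E →L[ℝ] F)) (h : C(K, E)) (k : K) :
    ContinuousMap.pointwiseApply A h k = A k (h k) := rfl

theorem ContinuousMap.hasFDerivAt_comp {V : C(E, F)} {V' : C(E, E →L[ℝ] F)}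
    (hV : ∀ x, HasFDerivAt V (V' x) x) (γ : C(K, E)) :
    HasFDerivAt (fun g : C(K, E) => V.comp g) (ContinuousMap.pointwiseApply (V'.comp γ)) γ := by
  rw [hasFDerivAt_iff_isLittleO, Asymptotics.isLittleO_iff]
  intro ε hε
  have hcont : ContinuousAt (fun g : C(K, E) => V'.comp g) γ :=
    (ContinuousMap.continuous_postcomp V').continuousAt
  obtain ⟨δ, hδ, hball⟩ := Metric.continuousAt_iff (f := fun g : C(K, E) => V'.comp g).1 hcont ε hε
  filter_upwards [Metric.ball_mem_nhds γ hδ] with g hg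
  refine (ContinuousMap.norm_le _ (by positivity)).2 fun k => ?_
  have hbound : ∀ z ∈ segment ℝ (γ k) (g k), ‖V' z - V' (γ k)‖ ≤ ε := by
    rintro z hz
    rw [segment_eq_image_lineMap] at hz
    obtain ⟨θ, hθ, rfl⟩ := hz
    have hmem : AffineMap.lineMap γ g θ ∈ Metric.ball γ δ :=
      (convex_ball γ δ).lineMap_mem (Metric.mem_ball_self hδ) hg hθ
    have h := (ContinuousMap.dist_apply_le_dist k).trans (hball hmem).le
    simpa [dist_eq_norm, AffineMap.lineMap_apply] using h
  have h := (convex_segment (𝕜 := ℝ) (γ k) (g k)).norm_image_sub_le_of_norm_hasFDerivWithin_le'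
    (fun z _ => (hV z).hasFDerivWithinAt) hbound (left_mem_segment ℝ _ _) (right_mem_segment ℝ _ _)
  refine h.trans ?_
  gcongr
  exact (g - γ).norm_coe_le_norm k

theorem ContinuousMap.contDiff_comp (n : ℕ) {F : Type u} [NormedAddCommGroup F] [NormedSpace ℝ F]
    (V : C(E, F)) (hV : ContDiff ℝ ∞ V) :
    ContDiff ℝ n (fun g : C(K, E) => V.comp g) := by
  induction n generalizing F with
  | zero => exact contDiff_zero.2 (ContinuousMap.continuous_postcomp V)
  | succ n ih =>
    have hV' : ContDiff ℝ ∞ (fderiv ℝ V) := (contDiff_infty_iff_fderiv.1 hV).2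
    let V' : C(E, E →L[ℝ] F) := ⟨fderiv ℝ V, hV'.continuous⟩
    refine contDiff_succ_iff_hasFDerivAt.2
      ⟨fun g => ContinuousMap.pointwiseApply (V'.comp g), ?_, fun g => ?_⟩
    · exact ContinuousMap.pointwiseApply.contDiff.comp (ih V' hV')
    · exact ContinuousMap.hasFDerivAt_comp
        (fun x => (hV.differentiable (by simp) x).hasFDerivAt) g

end Superposition

section Inverse

variable {E F : Type*} [NormedAddCommGroup E] [NormedSpace ℝ E] [CompleteSpace E]
  [NormedAddCommGroup F] [NormedSpace ℝ F]

/-- Inverse function theorem for smooth maps, with smoothness of the inverse on an open set. -/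
theorem ContDiff.exists_openPartialHomeomorph {f : E → F} (hf : ContDiff ℝ ∞ f) {x₀ : E}
    {f' : E ≃L[ℝ] F} (hf' : HasFDerivAt f (f' : E →L[ℝ] F) x₀) :
    ∃ e : OpenPartialHomeomorph E F, ⇑e = f ∧ x₀ ∈ e.source ∧ ContDiffOn ℝ ∞ e.symm e.target ∧
      ∀ y ∈ e.target, ∀ v, fderiv ℝ e.symm y (fderiv ℝ f (e.symm y) v) = v := by
  let s : Set E := fderiv ℝ f ⁻¹' range ((↑) : (E ≃L[ℝ] F) → E →L[ℝ] F)
  have hs : IsOpen s :=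
    ContinuousLinearEquiv.isOpen.preimage (hf.continuous_fderiv (by simp))
  let e := (hf.contDiffAt.toOpenPartialHomeomorph f hf' (by simp)).restrOpen s hs
  have hsource : x₀ ∈ e.source :=
    ⟨hf.contDiffAt.mem_toOpenPartialHomeomorph_source hf' (by simp), f', hf'.fderiv.symm⟩
  have hsymm : ∀ y ∈ e.target, e.symm y ∈ s := fun y hy => (e.map_target hy).2
  have hsmooth : ∀ y ∈ e.target, ContDiffAt ℝ ∞ e.symm y := fun y hy => by
    obtain ⟨A, hA⟩ := hsymm y hy
    refine e.contDiffAt_symm (f₀' := A) hy ?_ hf.contDiffAt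
    rw [hA]
    exact (hf.differentiable (by simp) _).hasFDerivAt
  refine ⟨e, rfl, hsource, fun y hy => (hsmooth y hy).contDiffWithinAt, fun y hy v => ?_⟩
  have hcomp : HasFDerivAt (e.symm ∘ f)
      ((fderiv ℝ e.symm y).comp (fderiv ℝ f (e.symm y))) (e.symm y) := by
    refine HasFDerivAt.comp _ ?_ (hf.differentiable (by simp) _).hasFDerivAt
    have : f (e.symm y) = y := e.right_inv hy
    rw [this]
    exact ((hsmooth y hy).differentiableAt (by simp)).hasFDerivAt
  have hid : HasFDerivAt (e.symm ∘ f) (ContinuousLinearMap.id ℝ E) (e.symm y) := by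
    refine (hasFDerivAt_id _).congr_of_eventuallyEq ?_
    filter_upwards [e.open_source.mem_nhds (e.map_target hy)] with x hx using e.left_inv hx
  exact DFunLike.congr_fun (hcomp.unique hid) v

end Inverse

section Primitive

variable {E : Type*} [NormedAddCommGroup E] [NormedSpace ℝ E]

/-- The primitive vanishing at `0` of a continuous path on the unit interval. -/
noncomputable def ContinuousMap.primitive : C(I, E) →L[ℝ] C(I, E) :=
  LinearMap.mkContinuous
    { toFun := fun γ => ⟨fun s => ∫ r in (0 : ℝ)..s, γ (projIcc 0 1 zero_le_one r), by
        have h : Continuous fun r : ℝ => γ (projIcc 0 1 zero_le_one r) := by fun_prop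
        exact (intervalIntegral.continuous_primitive
          (fun _ _ => h.intervalIntegrable _ _) 0).comp continuous_subtype_val⟩
      map_add' := fun γ δ => by
        ext s
        exact intervalIntegral.integral_add (Continuous.intervalIntegrable (by fun_prop) _ _)
          (Continuous.intervalIntegrable (by fun_prop) _ _)
      map_smul' := fun c γ => by
        ext s
        exact intervalIntegral.integral_smul _ _ } 1
    (fun γ => by
      refine (ContinuousMap.norm_le _ (by positivity)).2 fun s => ?_
      rw [one_mul]
      refine (intervalIntegral.norm_integral_le_of_norm_le_const
        (fun r _ => γ.norm_coe_le_norm (projIcc 0 1 zero_le_one r))).trans ?_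
      rw [sub_zero, abs_of_nonneg s.2.1]
      exact mul_le_of_le_one_right (norm_nonneg _) s.2.2)

theorem ContinuousMap.primitive_apply (γ : C(I, E)) (s : I) :
    ContinuousMap.primitive γ s = ∫ r in (0 : ℝ)..s, γ (projIcc 0 1 zero_le_one r) := rfl

theorem ContinuousMap.primitive_const_one [CompleteSpace E] (v : E) :
    ContinuousMap.primitive (ContinuousMap.const I v) 1 = v := by
  simp [ContinuousMap.primitive_apply]

end Primitive

section FlowBox

universe u

variable {E W : Type u} [NormedAddCommGroup E] [NormedSpace ℝ E]
  [NormedAddCommGroup W] [NormedSpace ℝ W]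

/-- The shooting map of a vector field `V`: its zeros in the second component are the
solutions `γ` of `γ' = τ V(γ)`, `γ 0 = p₀ + ι w`, and the first component is the endpoint. -/
noncomputable def shootingMap (V : C(E, E)) (p₀ : E) (ι : W →L[ℝ] E) (z : (ℝ × W) × C(I, E)) :
    E × C(I, E) :=
  (z.2 1, z.2 - ContinuousMap.const I (p₀ + ι z.1.2) -
    z.1.1 • ContinuousMap.primitive (V.comp z.2))

theorem contDiff_shootingMap {V : C(E, E)} (hV : ContDiff ℝ ∞ V) (p₀ : E) (ι : W →L[ℝ] E) :
    ContDiff ℝ ∞ (shootingMap V p₀ ι) := by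
  have hcomp : ContDiff ℝ ∞ fun g : C(I, E) => V.comp g :=
    contDiff_infty.2 fun n => ContinuousMap.contDiff_comp n V hV
  have heval : ContDiff ℝ ∞ fun g : C(I, E) => g 1 :=
    (ContinuousMap.evalCLM ℝ (1 : I) : C(I, E) →L[ℝ] E).contDiff
  have hconst : ContDiff ℝ ∞ fun x : E => ContinuousMap.const I x :=
    (ContinuousLinearMap.const ℝ I : E →L[ℝ] C(I, E)).contDiff
  exact (heval.comp contDiff_snd).prodMk
    ((contDiff_snd.sub (hconst.comp (contDiff_const.add (ι.contDiff.comp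
      (contDiff_snd.comp contDiff_fst))))).sub
    ((contDiff_fst.comp contDiff_fst).smul
      (ContinuousMap.primitive.contDiff.comp (hcomp.comp contDiff_snd))))

theorem fderiv_shootingMap {V : C(E, E)} {V' : C(E, E →L[ℝ] E)}
    (hV' : ∀ x, HasFDerivAt V (V' x) x) (p₀ : E) (ι : W →L[ℝ] E) (z h : (ℝ × W) × C(I, E)) :
    fderiv ℝ (shootingMap V p₀ ι) z h =
      (h.2 1, h.2 - ContinuousMap.const I (ι h.1.2) -
        (z.1.1 • ContinuousMap.primitive (ContinuousMap.pointwiseApply (V'.comp z.2) h.2) +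
          h.1.1 • ContinuousMap.primitive (V.comp z.2))) := by
  have hfst : HasFDerivAt (fun z : (ℝ × W) × C(I, E) => z.1.1) _ z :=
    (hasFDerivAt_fst (𝕜 := ℝ)).comp z hasFDerivAt_fst
  have hw : HasFDerivAt (fun z : (ℝ × W) × C(I, E) => z.1.2) _ z :=
    (hasFDerivAt_snd (𝕜 := ℝ)).comp z hasFDerivAt_fst
  have hsnd : HasFDerivAt (fun z : (ℝ × W) × C(I, E) => z.2) _ z :=
    hasFDerivAt_snd (𝕜 := ℝ)
  have heval : HasFDerivAt (fun z : (ℝ × W) × C(I, E) => z.2 1) _ z :=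
    (ContinuousMap.evalCLM ℝ (1 : I) : C(I, E) →L[ℝ] E).hasFDerivAt.comp z hsnd
  have hconst : HasFDerivAt
      (fun z : (ℝ × W) × C(I, E) => ContinuousMap.const I (p₀ + ι z.1.2)) _ z :=
    (ContinuousLinearMap.const ℝ I : E →L[ℝ] C(I, E)).hasFDerivAt.comp z
      ((ι.hasFDerivAt.comp z hw).const_add p₀)
  have hprim : HasFDerivAt
      (fun z : (ℝ × W) × C(I, E) => ContinuousMap.primitive (V.comp z.2)) _ z :=
    (ContinuousMap.primitive : C(I, E) →L[ℝ] C(I, E)).hasFDerivAt.comp z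
      ((ContinuousMap.hasFDerivAt_comp hV' z.2).comp z hsnd)
  have h := heval.prodMk ((hsnd.sub hconst).sub (hfst.smul hprim))
  have h' : HasFDerivAt (shootingMap V p₀ ι) _ z := h
  rw [h'.fderiv]
  rfl

/-- Rescaling time along a solution is a tangent direction of the solution set. -/
theorem smul_comp_eq_primitive [CompleteSpace E] {V : C(E, E)} {V' : C(E, E →L[ℝ] E)}
    (hV' : ∀ x, HasFDerivAt V (V' x) x) {τ : ℝ} {q : E} {γ δ : C(I, E)}
    (hγ : ∀ s, γ s = q + τ • ContinuousMap.primitive (V.comp γ) s)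
    (hδ : ∀ s : I, δ s = (s : ℝ) • V (γ s)) :
    δ = τ • ContinuousMap.primitive (ContinuousMap.pointwiseApply (V'.comp γ) δ) +
      ContinuousMap.primitive (V.comp γ) := by
  ext s
  let proj : ℝ → I := projIcc 0 1 zero_le_one
  let g : ℝ → E := fun r => q + τ • ∫ x in (0 : ℝ)..r, V (γ (proj x))
  have hcV : Continuous fun r => V (γ (proj r)) := by fun_prop
  have hcτ : Continuous fun r => τ • V' (γ (proj r)) (δ (proj r)) := by fun_prop
  have hg : ∀ r, HasDerivAt g (τ • V (γ (proj r))) r := fun r =>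
    ((intervalIntegral.integral_hasDerivAt_right (hcV.intervalIntegrable _ _)
      (hcV.stronglyMeasurableAtFilter _ _) hcV.continuousAt).const_smul τ).const_add q
  have hgγ : ∀ r ∈ Icc (0 : ℝ) 1, γ (proj r) = g r := fun r hr => by
    rw [hγ, ContinuousMap.primitive_apply, show ((proj r : I) : ℝ) = r by
      simp [proj, projIcc_of_mem zero_le_one hr]]
    rfl
  have hderiv : ∀ r ∈ uIcc (0 : ℝ) s, HasDerivAt (fun r => r • V (g r))
      (τ • V' (γ (proj r)) (δ (proj r)) + V (γ (proj r))) r := fun r hr => by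
    have hr' : r ∈ Icc (0 : ℝ) 1 := by
      rw [uIcc_of_le s.2.1] at hr
      exact ⟨hr.1, hr.2.trans s.2.2⟩
    have h : HasDerivAt (fun r => r • V (g r)) _ r := (hasDerivAt_id r).smul ((hV' (g r)).comp_hasDerivAt r (hg r))
    convert h using 1
    rw [hδ, hgγ r hr', show ((proj r : I) : ℝ) = r by
      simp [proj, projIcc_of_mem zero_le_one hr']]
    simp [smul_comm τ r]
  have hint := intervalIntegral.integral_eq_sub_of_hasDerivAt hderiv
    ((hcτ.add hcV).intervalIntegrable _ _)
  rw [intervalIntegral.integral_add (hcτ.intervalIntegrable _ _)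
    (hcV.intervalIntegrable _ _), intervalIntegral.integral_smul, zero_smul, sub_zero,
    ← hgγ s s.2, show proj (s : ℝ) = s from projIcc_val zero_le_one s, ← hδ] at hint
  exact hint.symm

/-- **Flow box theorem**: a smooth vector field has, near a point where it is transverse to the
image of `ι`, a smooth first integral with values in the domain of `ι`. -/
theorem exists_contDiffOn_firstIntegral [CompleteSpace E] [CompleteSpace W] {V : E → E}
    (hV : ContDiff ℝ ∞ V) (p₀ : E) (ι : W →L[ℝ] E) (A : (ℝ × W) ≃L[ℝ] E)
    (hA : ∀ z, A z = z.1 • V p₀ + ι z.2) :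
    ∃ (Ω : Set E) (Y : E → W), IsOpen Ω ∧ p₀ ∈ Ω ∧ ContDiffOn ℝ ∞ Y Ω ∧
      (∀ p ∈ Ω, fderiv ℝ Y p (V p) = 0) ∧ ∀ w, fderiv ℝ Y p₀ (ι w) = w := by
  let Vc : C(E, E) := ⟨V, hV.continuous⟩
  let V' : C(E, E →L[ℝ] E) := ⟨fderiv ℝ V, hV.continuous_fderiv (by simp)⟩
  have hV' : ∀ x, HasFDerivAt Vc (V' x) x := fun x => (hV.differentiable (by simp) x).hasFDerivAt
  let f := shootingMap Vc p₀ ι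
  have hf : ContDiff ℝ ∞ f := contDiff_shootingMap hV p₀ ι
  let z₀ : (ℝ × W) × C(I, E) := (0, ContinuousMap.const I p₀)
  let P : C(I, E) := ContinuousMap.primitive (ContinuousMap.const I (V p₀))
  have hP : P 1 = V p₀ := ContinuousMap.primitive_const_one _
  have hfz₀ : f z₀ = (p₀, 0) := by
    refine Prod.ext rfl ?_
    ext s
    simp [f, z₀, shootingMap]
  have hfderiv : ∀ h, fderiv ℝ f z₀ h =
      (h.2 1, h.2 - ContinuousMap.const I (ι h.1.2) - h.1.1 • P) := fun h => by
    have hcomp : Vc.comp (ContinuousMap.const I p₀) = ContinuousMap.const I (V p₀) := rfl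
    rw [show f = shootingMap Vc p₀ ι from rfl, fderiv_shootingMap hV']
    simp [z₀, P, hcomp]
  let ev : C(I, E) →L[ℝ] E := ContinuousMap.evalCLM ℝ 1
  let N : E × C(I, E) →L[ℝ] ℝ × W := (A.symm : E →L[ℝ] ℝ × W).comp
    (ContinuousLinearMap.fst ℝ E C(I, E) - ev.comp (ContinuousLinearMap.snd ℝ E C(I, E)))
  let B : E × C(I, E) →L[ℝ] (ℝ × W) × C(I, E) := N.prod
    (ContinuousLinearMap.snd ℝ E C(I, E) +
      ((ContinuousLinearMap.const ℝ I : E →L[ℝ] C(I, E)).comp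
        (ι.comp ((ContinuousLinearMap.snd ℝ ℝ W).comp N))) +
      ((ContinuousLinearMap.fst ℝ ℝ W).comp N).smulRight P)
  have hN : ∀ y, N y = A.symm (y.1 - y.2 1) := fun y => rfl
  have hB : ∀ y, B y = (N y, y.2 + ContinuousMap.const I (ι (N y).2) + (N y).1 • P) :=
    fun y => rfl
  have hleft : ∀ h, B (fderiv ℝ f z₀ h) = h := fun h => by
    have hN' : N (fderiv ℝ f z₀ h) = h.1 := by
      rw [hfderiv, hN, ContinuousLinearEquiv.symm_apply_eq, hA]
      simp [hP]
      abel
    rw [hB, hN', hfderiv]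
    refine Prod.ext rfl ?_
    dsimp only
    abel
  have hright : ∀ y, fderiv ℝ f z₀ (B y) = y := fun y => by
    have hAN : (N y).1 • V p₀ + ι (N y).2 = y.1 - y.2 1 := by
      rw [← hA, hN, ContinuousLinearEquiv.apply_symm_apply]
    rw [hfderiv, hB]
    refine Prod.ext ?_ ?_
    · have : y.1 = y.2 1 + ((N y).1 • V p₀ + ι (N y).2) := by rw [hAN]; abel
      rw [this]
      simp [hP]
      abel
    · dsimp only
      abel
  let D : ((ℝ × W) × C(I, E)) ≃L[ℝ] E × C(I, E) :=
    ContinuousLinearEquiv.equivOfInverse (fderiv ℝ f z₀) B hleft hright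
  have hD : HasFDerivAt f (D : (ℝ × W) × C(I, E) →L[ℝ] E × C(I, E)) z₀ :=
    (hf.differentiable (by simp) z₀).hasFDerivAt
  obtain ⟨e, hef, hz₀, hsymm, hinv⟩ := hf.exists_openPartialHomeomorph hD
  have htarget : (p₀, (0 : C(I, E))) ∈ e.target := by
    rw [← hfz₀, ← hef]
    exact e.map_source hz₀
  have hsymm₀ : e.symm (p₀, 0) = z₀ := by
    rw [← hfz₀, ← hef, e.left_inv hz₀]
  let j : E →L[ℝ] E × C(I, E) := ContinuousLinearMap.inl ℝ E C(I, E)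
  let π : (ℝ × W) × C(I, E) →L[ℝ] W :=
    (ContinuousLinearMap.snd ℝ ℝ W).comp (ContinuousLinearMap.fst ℝ (ℝ × W) C(I, E))
  have hY : ∀ p ∈ j ⁻¹' e.target, ∀ v,
      fderiv ℝ (fun p => π (e.symm (j p))) p v = π (fderiv ℝ e.symm (j p) (j v)) := by
    intro p hp v
    have hd : HasFDerivAt e.symm (fderiv ℝ e.symm (j p)) (j p) :=
      ((hsymm.contDiffAt (e.open_target.mem_nhds hp)).differentiableAt (by simp)).hasFDerivAt
    have h : HasFDerivAt (fun p => π (e.symm (j p))) _ p :=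
      π.hasFDerivAt.comp p (hd.comp p j.hasFDerivAt)
    rw [h.fderiv]
    rfl
  refine ⟨j ⁻¹' e.target, fun p => π (e.symm (j p)), e.open_target.preimage j.continuous, htarget,
    π.contDiff.comp_contDiffOn (hsymm.comp j.contDiff.contDiffOn fun _ h => h),
    fun p hp => ?_, fun w => ?_⟩
  · rw [hY p hp]
    set z := e.symm (j p) with hz
    have hfz : f z = (p, 0) := by rw [← hef, hz, e.right_inv hp]; rfl
    have hend : z.2 1 = p := congrArg Prod.fst hfz
    have hsol : ∀ s, z.2 s =
        (p₀ + ι z.1.2) + z.1.1 • ContinuousMap.primitive (Vc.comp z.2) s := fun s => by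
      have h := DFunLike.congr_fun (congrArg Prod.snd hfz) s
      have h' : z.2 s - (p₀ + ι z.1.2) -
        z.1.1 • ContinuousMap.primitive (Vc.comp z.2) s = 0 := h
      rw [sub_sub, sub_eq_zero] at h'
      exact h'
    let δ : C(I, E) := ⟨fun s => (s : ℝ) • Vc (z.2 s), by fun_prop⟩
    have hδ := smul_comp_eq_primitive hV' hsol (δ := δ) fun _ => rfl
    have hker : fderiv ℝ f z ((1, 0), δ) = j (V p) := by
      rw [show f = shootingMap Vc p₀ ι from rfl, fderiv_shootingMap hV']
      refine Prod.ext ?_ ?_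
      · simp [δ, hend, j, Vc]
      · have : ContinuousMap.const I (ι (0 : W)) = 0 := by ext; simp
        simp only [this, sub_zero, one_smul]
        rw [← hδ, sub_self]
        rfl
    rw [← hker, hinv (j p) hp]
    rfl
  · rw [hY p₀ htarget]
    have hker : fderiv ℝ f z₀ ((0, w), ContinuousMap.const I (ι w)) = j (ι w) := by
      rw [hfderiv]
      refine Prod.ext rfl ?_
      simp [j]
    have h := hinv (j p₀) htarget ((0, w), ContinuousMap.const I (ι w))
    rw [show e.symm (j p₀) = z₀ from hsymm₀, hker] at h
    rw [h]
    rfl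

end FlowBox

theorem exists_antideriv_inv {a : ℝ → ℝ} (ha : ContDiff ℝ ∞ a) {t₀ : ℝ} (ha₀ : a t₀ ≠ 0) :
    ∃ (s : Set ℝ) (T : ℝ → ℝ), IsOpen s ∧ t₀ ∈ s ∧ ContDiffOn ℝ ∞ T s ∧
      ∀ t ∈ s, a t * deriv T t = 1 := by
  obtain ⟨r, hr, hball⟩ := Metric.isOpen_iff.1
    (isOpen_ne_fun ha.continuous continuous_const) t₀ ha₀
  have hinv : ContDiffOn ℝ ∞ (fun t => (a t)⁻¹) (Metric.ball t₀ r) :=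
    ha.contDiffOn.inv hball
  have hderiv : ∀ t ∈ Metric.ball t₀ r,
      HasDerivAt (fun t => ∫ x in t₀..t, (a x)⁻¹) (a t)⁻¹ t := fun t ht => by
    have hsub : uIcc t₀ t ⊆ Metric.ball t₀ r := by
      rw [← segment_eq_uIcc]
      exact (convex_ball t₀ r).segment_subset (Metric.mem_ball_self hr) ht
    exact intervalIntegral.integral_hasDerivAt_right
      (hinv.continuousOn.mono hsub).intervalIntegrable
      (hinv.continuousOn.stronglyMeasurableAtFilter Metric.isOpen_ball t ht)
      (hinv.continuousOn.continuousAt (Metric.isOpen_ball.mem_nhds ht))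
  refine ⟨Metric.ball t₀ r, _, Metric.isOpen_ball, Metric.mem_ball_self hr,
    (contDiffOn_infty_iff_deriv_of_isOpen Metric.isOpen_ball).2
      ⟨fun t ht => (hderiv t ht).differentiableAt.differentiableWithinAt,
        hinv.congr fun t ht => (hderiv t ht).deriv⟩, fun t ht => ?_⟩
  rw [(hderiv t ht).deriv]
  exact mul_inv_cancel₀ (hball ht)


/-- Straightening lemma, case `a(t₀) ≠ 0`: the vector field
`Q = a(t)∂t + b(t,x,u)∂x + c(t,x,u)∂u` can be locally reduced to `∂t` by a
change of variables `(t,x,u) ↦ (T(t), X(t,x,u), U(t,x,u))`. Partial derivatives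
are expressed through the Fréchet derivative applied to the coordinate
directions `(1,0,0)`, `(0,1,0)`, `(0,0,1)`. -/
theorem straightening_lemma_time_case
    (a : ℝ → ℝ) (b c : ℝ × ℝ × ℝ → ℝ)
    (ha : ContDiff ℝ (⊤ : ℕ∞) a) (hb : ContDiff ℝ (⊤ : ℕ∞) b) (hc : ContDiff ℝ (⊤ : ℕ∞) c)
    (p₀ : ℝ × ℝ × ℝ) (ha₀ : a p₀.1 ≠ 0) :
    ∃ (Ω : Set (ℝ × ℝ × ℝ)) (T : ℝ → ℝ) (X U : ℝ × ℝ × ℝ → ℝ),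
      IsOpen Ω ∧ p₀ ∈ Ω ∧
      ContDiffOn ℝ (⊤ : ℕ∞) (fun p : ℝ × ℝ × ℝ => T p.1) Ω ∧
      ContDiffOn ℝ (⊤ : ℕ∞) X Ω ∧ ContDiffOn ℝ (⊤ : ℕ∞) U Ω ∧
      ∀ p ∈ Ω,
        deriv T p.1 ≠ 0 ∧
        fderiv ℝ X p (0, 1, 0) * fderiv ℝ U p (0, 0, 1) -
          fderiv ℝ X p (0, 0, 1) * fderiv ℝ U p (0, 1, 0) ≠ 0 ∧
        a p.1 * deriv T p.1 = 1 ∧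
        a p.1 * fderiv ℝ X p (1, 0, 0) + b p * fderiv ℝ X p (0, 1, 0) +
          c p * fderiv ℝ X p (0, 0, 1) = 0 ∧
        a p.1 * fderiv ℝ U p (1, 0, 0) + b p * fderiv ℝ U p (0, 1, 0) +
          c p * fderiv ℝ U p (0, 0, 1) = 0 := by
  obtain ⟨s, T, hs, ht₀, hT, hTa⟩ := exists_antideriv_inv ha ha₀
  let V : ℝ × ℝ × ℝ → ℝ × ℝ × ℝ := fun p => (a p.1, b p, c p)
  have hV : ContDiff ℝ ∞ V := (ha.comp contDiff_fst).prodMk (hb.prodMk hc)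
  let ι : ℝ × ℝ →L[ℝ] ℝ × ℝ × ℝ := ContinuousLinearMap.inr ℝ ℝ (ℝ × ℝ)
  let A : (ℝ × ℝ × ℝ) ≃ₗ[ℝ] ℝ × ℝ × ℝ :=
    { toFun := fun z => z.1 • V p₀ + ι z.2
      map_add' := fun y z => by simp [add_smul]; abel
      map_smul' := fun r z => by simp [mul_smul]
      invFun := fun q => (q.1 / a p₀.1, q.2 - (q.1 / a p₀.1) • (b p₀, c p₀))
      left_inv := fun z => by ext <;> simp [V, ι, ha₀]
      right_inv := fun q => by ext <;> simp [V, ι, ha₀] }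
  obtain ⟨Ω, Y, hΩ, hp₀, hY, hYV, hYι⟩ :=
    exists_contDiffOn_firstIntegral hV p₀ ι A.toContinuousLinearEquiv fun _ => rfl
  have hdY : ∀ p ∈ Ω, DifferentiableAt ℝ Y p := fun p hp =>
    (hY.contDiffAt (hΩ.mem_nhds hp)).differentiableAt (by simp)
  have hX : ∀ p ∈ Ω, ∀ v, fderiv ℝ (fun p => (Y p).1) p v = (fderiv ℝ Y p v).1 :=
    fun p hp v => by rw [fderiv.fst (hdY p hp)]; rfl
  have hU : ∀ p ∈ Ω, ∀ v, fderiv ℝ (fun p => (Y p).2) p v = (fderiv ℝ Y p v).2 :=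
    fun p hp v => by rw [fderiv.snd (hdY p hp)]; rfl
  let J : ℝ × ℝ × ℝ → ℝ := fun p =>
    (fderiv ℝ Y p (0, 1, 0)).1 * (fderiv ℝ Y p (0, 0, 1)).2 -
      (fderiv ℝ Y p (0, 0, 1)).1 * (fderiv ℝ Y p (0, 1, 0)).2
  have hJ : ContinuousOn J Ω := by
    have := hY.continuousOn_fderiv_of_isOpen hΩ (by simp)
    fun_prop
  have hJ₀ : J p₀ ≠ 0 := by
    have h₁ : fderiv ℝ Y p₀ (0, 1, 0) = (1, 0) := hYι (1, 0)
    have h₂ : fderiv ℝ Y p₀ (0, 0, 1) = (0, 1) := hYι (0, 1)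
    simp [J, h₁, h₂]
  refine ⟨(Ω ∩ J ⁻¹' {0}ᶜ) ∩ Prod.fst ⁻¹' s, T, fun p => (Y p).1, fun p => (Y p).2,
    (hJ.isOpen_inter_preimage hΩ isOpen_compl_singleton).inter (hs.preimage continuous_fst),
    ⟨⟨hp₀, hJ₀⟩, ht₀⟩, hT.comp contDiff_fst.contDiffOn fun _ hp => hp.2,
    (contDiff_fst.comp_contDiffOn hY).mono fun _ hp => hp.1.1,
    (contDiff_snd.comp_contDiffOn hY).mono fun _ hp => hp.1.1, ?_⟩
  rintro p ⟨⟨hp, hJp⟩, hps⟩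
  have hsplit : V p = a p.1 • ((1, 0, 0) : ℝ × ℝ × ℝ) + b p • ((0, 1, 0) : ℝ × ℝ × ℝ) +
      c p • ((0, 0, 1) : ℝ × ℝ × ℝ) := by simp [V]
  have hzero := hYV p hp
  rw [hsplit, map_add, map_add, map_smul, map_smul, map_smul] at hzero
  simp only [hX p hp, hU p hp]
  exact ⟨right_ne_zero_of_mul_eq_one (hTa _ hps), hJp, hTa _ hps,
    congrArg Prod.fst hzero, congrArg Prod.snd hzero⟩
end

section
/- Let u : ℝ² → ℝ be twice continuously differentiable and satisfy u_t(t,x) = exp(u_x(t,x)) · u_xx(t,x) at every (t,x) ∈ ℝ². Then for every ε ∈ ℝ, the function v(t,x) = u(e^{−ε}·t, x) − ε·x satisfies v_t(t,x) = exp(v_x(t,x)) · v_xx(t,x) at every (t,x) ∈ ℝ². (This realizes the additional symmetry e₅ = t∂t − x∂u admitted by u_t = F(u_x)u_xx in the case F = exp u_x.) -/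
/-- `u_t = ∂u/∂t`. -/
noncomputable def pd_t (u : ℝ × ℝ → ℝ) (p : ℝ × ℝ) : ℝ :=
  deriv (fun s => u (s, p.2)) p.1

/-- `u_x = ∂u/∂x`. -/
noncomputable def pd_x (u : ℝ × ℝ → ℝ) (p : ℝ × ℝ) : ℝ :=
  deriv (fun y => u (p.1, y)) p.2

/-- `u_xx = ∂²u/∂x²`. -/
noncomputable def pd_xx (u : ℝ × ℝ → ℝ) (p : ℝ × ℝ) : ℝ :=
  deriv (deriv (fun y => u (p.1, y))) p.2

/-- The symmetry `e₅ = t∂t − x∂u` of `u_t = exp(u_x)·u_xx`: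
if `u` solves the equation then so does `v(t,x) = u(e^{−ε}t, x) − εx`. -/
theorem symmetry_of_ut_eq_exp_ux_uxx
    (u : ℝ × ℝ → ℝ) (hu : ContDiff ℝ 2 u)
    (heq : ∀ p : ℝ × ℝ, pd_t u p = Real.exp (pd_x u p) * pd_xx u p)
    (ε : ℝ) :
    ∀ p : ℝ × ℝ,
      pd_t (fun q : ℝ × ℝ => u (Real.exp (-ε) * q.1, q.2) - ε * q.2) p =
        Real.exp (pd_x (fun q : ℝ × ℝ =>
            u (Real.exp (-ε) * q.1, q.2) - ε * q.2) p) *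
          pd_xx (fun q : ℝ × ℝ => u (Real.exp (-ε) * q.1, q.2) - ε * q.2) p := by
  rintro ⟨t, x⟩
  have hdiff : Differentiable ℝ u := hu.differentiable (by norm_num)
  have hx : deriv (fun y => u (Real.exp (-ε) * t, y) - ε * y) =
      fun y => deriv (fun z => u (Real.exp (-ε) * t, z)) y - ε := by
    funext y
    have hslice : DifferentiableAt ℝ (fun z => u (Real.exp (-ε) * t, z)) y := by fun_prop
    have hlin : HasDerivAt (fun z : ℝ => ε * z) ε y := by
      simpa using (hasDerivAt_id y).const_mul ε
    exact (hslice.hasDerivAt.sub hlin).deriv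
  have ht : deriv (fun s => u (Real.exp (-ε) * s, x) - ε * x) t =
      Real.exp (-ε) * deriv (fun s => u (s, x)) (Real.exp (-ε) * t) := by
    rw [deriv_sub_const]
    exact deriv_comp_mul_left (Real.exp (-ε)) (fun s => u (s, x)) t
  have h := heq (Real.exp (-ε) * t, x)
  simp only [pd_t, pd_x, pd_xx] at h ⊢
  rw [ht, hx, deriv_sub_const, h]
  beta_reduce
  rw [sub_eq_add_neg, Real.exp_add]
  ring
end

section
/- Let Ω ⊆ ℝ² be open, let u : Ω → ℝ be twice continuously differentiable with u(t,x) ≠ 0 on Ω, and suppose u_t = u⁻⁴·u_xx − 2·u⁻⁵·(u_x)² at every point of Ω. Fix ε ∈ ℝ and let Ω' = {(t,x) : 1 − εx ≠ 0 and (t, x/(1−εx)) ∈ Ω}. Then the function v(t,x) = (1 − εx)⁻¹ · u(t, x/(1−εx)) is nonvanishing on Ω' and satisfies v_t = v⁻⁴·v_xx − 2·v⁻⁵·(v_x)² at every point of Ω'. (This realizes the projective symmetry −x²∂x + xu∂u from the sl(2,ℝ) invariance algebra of this equation.) -/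
/-- The projective map `x ↦ x / (1 - ε x)` has derivative `(1 - ε x)⁻²`. -/
theorem hasDerivAt_div_one_sub_mul {ε x : ℝ} (hx : 1 - ε * x ≠ 0) :
    HasDerivAt (fun y : ℝ => y / (1 - ε * y)) ((1 - ε * x)⁻¹ ^ 2) x := by
  have hw : HasDerivAt (fun y : ℝ => 1 - ε * y) (-ε) x := by
    simpa using ((hasDerivAt_id x).const_mul ε).const_sub 1
  refine ((hasDerivAt_id x).div hw hx).congr_deriv ?_
  simp only [id]
  field_simp
  ring

theorem hasDerivAt_inv_one_sub_mul {ε x : ℝ} (hx : 1 - ε * x ≠ 0) :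
    HasDerivAt (fun y : ℝ => (1 - ε * y)⁻¹) (ε * (1 - ε * x)⁻¹ ^ 2) x := by
  have hw : HasDerivAt (fun y : ℝ => 1 - ε * y) (-ε) x := by
    simpa using ((hasDerivAt_id x).const_mul ε).const_sub 1
  refine (hw.inv hx).congr_deriv ?_
  field_simp

/-- First derivative of the projective transform of weight one. -/
theorem hasDerivAt_projective {f : ℝ → ℝ} {ε x : ℝ} (hx : 1 - ε * x ≠ 0)
    (hf : DifferentiableAt ℝ f (x / (1 - ε * x))) :
    HasDerivAt (fun y => (1 - ε * y)⁻¹ * f (y / (1 - ε * y)))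
      (ε * (1 - ε * x)⁻¹ ^ 2 * f (x / (1 - ε * x)) +
        (1 - ε * x)⁻¹ ^ 3 * deriv f (x / (1 - ε * x))) x := by
  refine ((hasDerivAt_inv_one_sub_mul hx).mul
    (hf.hasDerivAt.comp x (hasDerivAt_div_one_sub_mul hx))).congr_deriv ?_
  simp only [Function.comp]
  ring

/-- Second derivative of the projective transform of weight one. -/
theorem deriv_deriv_projective {f : ℝ → ℝ} {ε x : ℝ} (hx : 1 - ε * x ≠ 0)
    (hf : ContDiffAt ℝ 2 f (x / (1 - ε * x))) :
    deriv (deriv fun y => (1 - ε * y)⁻¹ * f (y / (1 - ε * y))) x =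
      2 * ε ^ 2 * (1 - ε * x)⁻¹ ^ 3 * f (x / (1 - ε * x)) +
        4 * ε * (1 - ε * x)⁻¹ ^ 4 * deriv f (x / (1 - ε * x)) +
        (1 - ε * x)⁻¹ ^ 5 * deriv (deriv f) (x / (1 - ε * x)) := by
  have hφ := hasDerivAt_div_one_sub_mul hx
  have hι := hasDerivAt_inv_one_sub_mul hx
  have hfirst : deriv (fun y => (1 - ε * y)⁻¹ * f (y / (1 - ε * y))) =ᶠ[nhds x]
      fun y => ε * (1 - ε * y)⁻¹ ^ 2 * f (y / (1 - ε * y)) +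
        (1 - ε * y)⁻¹ ^ 3 * deriv f (y / (1 - ε * y)) := by
    have hw : ∀ᶠ y in nhds x, 1 - ε * y ≠ 0 :=
      ContinuousAt.eventually_ne (by fun_prop) hx
    have hd : ∀ᶠ y in nhds x, ContDiffAt ℝ 2 f (y / (1 - ε * y)) :=
      hφ.continuousAt.eventually (hf.eventually (by simp))
    filter_upwards [hw, hd] with y hy hfy
    exact (hasDerivAt_projective hy (hfy.differentiableAt (by simp))).deriv
  have hf₁ : HasDerivAt f (deriv f (x / (1 - ε * x))) (x / (1 - ε * x)) :=
    (hf.differentiableAt (by simp)).hasDerivAt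
  have hf₂ : HasDerivAt (deriv f) (deriv (deriv f) (x / (1 - ε * x))) (x / (1 - ε * x)) :=
    ((hf.derivWithin (m := 1) (by norm_num)).differentiableAt (by simp)).hasDerivAt
  rw [hfirst.deriv_eq]
  refine (((((hι.pow 2).const_mul ε).mul (hf₁.comp x hφ)).add
    ((hι.pow 3).mul (hf₂.comp x hφ))).congr_deriv ?_).deriv
  simp only [Function.comp, Pi.pow_apply]
  push_cast
  ring

/-- The projective symmetry `−x²∂x + xu∂u` of `u_t = u⁻⁴u_xx − 2u⁻⁵u_x²`:
if `u` is a nonvanishing solution on `Ω` then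
`v(t,x) = (1−εx)⁻¹·u(t, x/(1−εx))` is a nonvanishing solution on `Ω'`. -/
theorem projective_symmetry_of_fast_diffusion
    (Ω : Set (ℝ × ℝ)) (hΩ : IsOpen Ω)
    (u : ℝ × ℝ → ℝ) (hu : ContDiffOn ℝ 2 u Ω)
    (hne : ∀ p ∈ Ω, u p ≠ 0)
    (heq : ∀ p ∈ Ω,
      pd_t u p = (u p) ^ (-4 : ℤ) * pd_xx u p -
        2 * (u p) ^ (-5 : ℤ) * (pd_x u p) ^ 2)
    (ε : ℝ) :
    ∀ p : ℝ × ℝ, 1 - ε * p.2 ≠ 0 → (p.1, p.2 / (1 - ε * p.2)) ∈ Ω →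
      (fun q : ℝ × ℝ => (1 - ε * q.2)⁻¹ * u (q.1, q.2 / (1 - ε * q.2))) p ≠ 0 ∧
      pd_t (fun q : ℝ × ℝ =>
          (1 - ε * q.2)⁻¹ * u (q.1, q.2 / (1 - ε * q.2))) p =
        ((fun q : ℝ × ℝ =>
            (1 - ε * q.2)⁻¹ * u (q.1, q.2 / (1 - ε * q.2))) p) ^ (-4 : ℤ) *
          pd_xx (fun q : ℝ × ℝ =>
            (1 - ε * q.2)⁻¹ * u (q.1, q.2 / (1 - ε * q.2))) p -
        2 * ((fun q : ℝ × ℝ =>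
            (1 - ε * q.2)⁻¹ * u (q.1, q.2 / (1 - ε * q.2))) p) ^ (-5 : ℤ) *
          (pd_x (fun q : ℝ × ℝ =>
            (1 - ε * q.2)⁻¹ * u (q.1, q.2 / (1 - ε * q.2))) p) ^ 2 := by
  rintro ⟨t, x⟩ hx hp
  dsimp only at hx hp
  have hu0 := hne _ hp
  have hsol := heq _ hp
  have hf : ContDiffAt ℝ 2 (fun y => u (t, y)) (x / (1 - ε * x)) :=
    (hu.contDiffAt (hΩ.mem_nhds hp)).comp (x / (1 - ε * x))
      (contDiffAt_const.prodMk contDiffAt_id)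
  refine ⟨mul_ne_zero (inv_ne_zero hx) hu0, ?_⟩
  simp only [pd_t, pd_x, pd_xx] at hsol ⊢
  rw [deriv_const_mul_field, hsol, deriv_deriv_projective hx hf,
    (hasDerivAt_projective hx (hf.differentiableAt (by simp))).deriv]
  generalize deriv (deriv fun y => u (t, y)) (x / (1 - ε * x)) = c
  generalize deriv (fun y => u (t, y)) (x / (1 - ε * x)) = b
  generalize u (t, x / (1 - ε * x)) = a at hu0 ⊢
  generalize 1 - ε * x = w at hx ⊢
  simp only [zpow_neg, zpow_ofNat]
  field_simp
  ring
end

section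
/- Let k ∈ ℝ, k ≠ 0, σ ∈ {1, −1}, and let u : ℝ² → ℝ be twice continuously differentiable satisfying u_t(t,x) = σ·exp(2k·u_x(t,x))·u_xx(t,x) + x at every (t,x) ∈ ℝ². Define, for all (s,y) with 2ks > 0, v(s,y) = −2k·u( ln(2ks)/(2k), −y ) − y·ln(2ks). Then v satisfies v_s(s,y) = σ·exp(v_y(s,y))·v_yy(s,y) at every (s,y) with 2ks > 0. (Thus the change of variables t̄ = (1/(2k))e^{2kt}, x̄ = −x, v = −2ku + 2ktx reduces u_t = σe^{2ku_x}u_xx + x to the equation v_t = σe^{v_x}v_xx.) -/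
/-- The change of variables `t̄ = (1/(2k))e^{2kt}`, `x̄ = −x`,
`v = −2ku + 2ktx` reduces `u_t = σe^{2ku_x}u_xx + x` to `v_t = σe^{v_x}v_xx`:
if `u` solves the former on ℝ², then
`v(s,y) = −2k·u(ln(2ks)/(2k), −y) − y·ln(2ks)` solves the latter for `2ks > 0`. -/
theorem change_of_variables_exp_diffusion_forced
    (k : ℝ) (hk : k ≠ 0) (σ : ℝ) (hσ : σ = 1 ∨ σ = -1)
    (u : ℝ × ℝ → ℝ) (hu : ContDiff ℝ 2 u)
    (heq : ∀ p : ℝ × ℝ,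
      pd_t u p = σ * Real.exp (2 * k * pd_x u p) * pd_xx u p + p.2) :
    ∀ p : ℝ × ℝ, 0 < 2 * k * p.1 →
      pd_t (fun q : ℝ × ℝ =>
          -2 * k * u (Real.log (2 * k * q.1) / (2 * k), -q.2) -
            q.2 * Real.log (2 * k * q.1)) p =
        σ * Real.exp (pd_x (fun q : ℝ × ℝ =>
            -2 * k * u (Real.log (2 * k * q.1) / (2 * k), -q.2) -
              q.2 * Real.log (2 * k * q.1)) p) *
          pd_xx (fun q : ℝ × ℝ =>
            -2 * k * u (Real.log (2 * k * q.1) / (2 * k), -q.2) -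
              q.2 * Real.log (2 * k * q.1)) p := by
  rintro ⟨s, y⟩ hs
  have hs' : 0 < 2 * k * s := hs
  have hs0 : s ≠ 0 := by
    rintro rfl
    simp at hs'
  set L := Real.log (2 * k * s) with hL
  set T := L / (2 * k) with hT
  have hud : Differentiable ℝ u := hu.differentiable (by norm_num)
  set g : ℝ → ℝ := fun z => u (T, z) with hg
  have hgc : ContDiff ℝ 2 g := hu.comp (contDiff_const.prodMk contDiff_id)
  have hgd : Differentiable ℝ g := hgc.differentiable (by norm_num)
  have hgd' : Differentiable ℝ (deriv g) :=
    (contDiff_succ_iff_deriv.1 (show ContDiff ℝ (1 + 1) g from hgc)).2.2.differentiable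
      one_ne_zero
  have hfirst : ∀ z, HasDerivAt (fun y => -2 * k * g (-y) - y * L)
      (2 * k * deriv g (-z) - L) z := by
    intro z
    have h := (((hgd (-z)).hasDerivAt.comp z (hasDerivAt_neg z)).const_mul (-2 * k)).sub
      ((hasDerivAt_id z).mul_const L)
    exact h.congr_deriv (by ring)
  have hsecond : HasDerivAt (fun z => 2 * k * deriv g (-z) - L)
      (-(2 * k) * deriv (deriv g) (-y)) y := by
    have h := (((hgd' (-y)).hasDerivAt.comp y (hasDerivAt_neg y)).const_mul (2 * k)).sub_const L
    exact h.congr_deriv (by ring)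
  have hlog : HasDerivAt (fun r => Real.log (2 * k * r)) (1 / s) s := by
    have h := ((hasDerivAt_id s).const_mul (2 * k)).log hs'.ne'
    exact h.congr_deriv (by simp only [id]; field_simp)
  have htime : HasDerivAt (fun r => -2 * k * u (Real.log (2 * k * r) / (2 * k), -y) -
      y * Real.log (2 * k * r)) (-(pd_t u (T, -y) + y) / s) s := by
    have hut : HasDerivAt (fun r => u (r, -y)) (pd_t u (T, -y)) T :=
      (hud.comp (differentiable_id.prodMk (differentiable_const (-y))) T).hasDerivAt
    have h := ((HasDerivAt.comp s hut (hlog.div_const (2 * k))).const_mul (-2 * k)).sub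
      (hlog.const_mul y)
    exact h.congr_deriv (by field_simp; ring)
  have hx : deriv (fun y => -2 * k * u (T, -y) - y * L) =
      fun z => 2 * k * deriv g (-z) - L :=
    funext fun z => (hfirst z).deriv
  have hpde : pd_t u (T, -y) =
      σ * Real.exp (2 * k * deriv g (-y)) * deriv (deriv g) (-y) + -y := heq (T, -y)
  have hvt := htime.deriv
  simp only [pd_t, pd_x, pd_xx] at hvt hpde ⊢
  rw [hvt, hpde, ← hL, ← hT, hx, hsecond.deriv, Real.exp_sub, hL, Real.exp_log hs']
  field_simp
  ring
end

section
/- Let Ω ⊆ ℝ × (0,∞) be open and let u : Ω → (0,∞) be twice continuously differentiable satisfying u_t = x²·u⁻¹·e^{ω}·u_xx + (−2 − ω²)·e^{ω}, where ω := x·u_x/u, at every point (t,x) ∈ Ω. Define, for all (t,y) with y < 0 and (t, −1/y) ∈ Ω, v(t,y) = −y·ln u(t, −1/y) − 2y·(1 + ln(−1/y)). Then v satisfies v_t(t,y) = exp(v_y(t,y))·v_yy(t,y) at every such (t,y). (Thus the change of variables t̄ = t, x̄ = −x⁻¹, v = x⁻¹ln u + 2x⁻¹(1 + ln x) reduces the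 equation u_t = x²u⁻¹e^{ω}u_xx + (−2 − ω²)e^{ω} to v_t = e^{v_x}v_xx.) -/
theorem hasDerivAt_neg_one_div {y : ℝ} (hy : y ≠ 0) :
    HasDerivAt (fun z : ℝ => -1 / z) (1 / y ^ 2) y := by
  have h := (hasDerivAt_const y (-1 : ℝ)).div (hasDerivAt_id' y) hy
  exact h.congr_deriv (by ring)

theorem hasDerivAt_log_neg_one_div {y : ℝ} (hy : y ≠ 0) :
    HasDerivAt (fun z : ℝ => Real.log (-1 / z)) (-1 / y) y := by
  have hne : -1 / y ≠ 0 := div_ne_zero (by norm_num) hy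
  refine ((hasDerivAt_neg_one_div hy).log hne).congr_deriv ?_
  field_simp

theorem hasDerivAt_log_comp_neg_one_div {f : ℝ → ℝ} {f' y : ℝ} (hy : y ≠ 0)
    (hf : HasDerivAt f f' (-1 / y)) (hpos : f (-1 / y) ≠ 0) :
    HasDerivAt (fun z : ℝ => Real.log (f (-1 / z))) (f' / f (-1 / y) / y ^ 2) y := by
  have h := (HasDerivAt.comp y hf (hasDerivAt_neg_one_div hy)).log hpos
  exact h.congr_deriv (by simp only [Function.comp]; ring)

/-- The first derivative in `y` of `-y ln f(-1/y) - 2y(1 + ln(-1/y))`. -/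
theorem hasDerivAt_transform {f : ℝ → ℝ} {f' y : ℝ} (hy : y ≠ 0)
    (hf : HasDerivAt f f' (-1 / y)) (hpos : f (-1 / y) ≠ 0) :
    HasDerivAt (fun z : ℝ => -z * Real.log (f (-1 / z)) - 2 * z * (1 + Real.log (-1 / z)))
      (-Real.log (f (-1 / y)) + -1 / y * f' / f (-1 / y) - 2 * Real.log (-1 / y)) y := by
  have h := ((hasDerivAt_id' y).neg.mul (hasDerivAt_log_comp_neg_one_div hy hf hpos)).sub
    (((hasDerivAt_id' y).const_mul 2).mul ((hasDerivAt_log_neg_one_div hy).const_add 1))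
  refine h.congr_deriv ?_
  simp only [Pi.neg_apply]
  field_simp
  ring

/-- The second derivative in `y` of `-y ln f(-1/y) - 2y(1 + ln(-1/y))`. -/
theorem hasDerivAt_deriv_transform {f g : ℝ → ℝ} {g' y : ℝ} (hy : y ≠ 0)
    (hf : HasDerivAt f (g (-1 / y)) (-1 / y)) (hg : HasDerivAt g g' (-1 / y))
    (hpos : f (-1 / y) ≠ 0) :
    HasDerivAt (fun z : ℝ => -Real.log (f (-1 / z)) + -1 / z * g (-1 / z) / f (-1 / z)
        - 2 * Real.log (-1 / z))
      (-1 / y * ((-1 / y) ^ 2 * g' / f (-1 / y) - (-1 / y * g (-1 / y) / f (-1 / y)) ^ 2 - 2))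
      y := by
  have hx := hasDerivAt_neg_one_div hy
  have h := ((hasDerivAt_log_comp_neg_one_div hy hf hpos).neg.add
    ((hx.mul (HasDerivAt.comp y hg hx)).div (HasDerivAt.comp y hf hx) hpos)).sub
    ((hasDerivAt_log_neg_one_div hy).const_mul 2)
  refine h.congr_deriv ?_
  simp only [Function.comp, Pi.mul_apply]
  field_simp
  ring

/-- The change of variables `t̄ = t`, `x̄ = −x⁻¹`, `v = x⁻¹ln u + 2x⁻¹(1+ln x)`
reduces `u_t = x²u⁻¹e^{ω}u_xx + (−2−ω²)e^{ω}` (with `ω = xu_x/u`) to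
`v_t = e^{v_x}v_xx`. -/
theorem change_of_variables_to_exp_diffusion
    (Ω : Set (ℝ × ℝ)) (hΩ : IsOpen Ω) (hΩ' : Ω ⊆ {p : ℝ × ℝ | 0 < p.2})
    (u : ℝ × ℝ → ℝ) (hu : ContDiffOn ℝ 2 u Ω)
    (hupos : ∀ p ∈ Ω, 0 < u p)
    (heq : ∀ p ∈ Ω,
      pd_t u p =
        p.2 ^ 2 * (u p)⁻¹ * Real.exp (p.2 * pd_x u p / u p) * pd_xx u p +
          (-2 - (p.2 * pd_x u p / u p) ^ 2) *
            Real.exp (p.2 * pd_x u p / u p)) :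
    ∀ p : ℝ × ℝ, p.2 < 0 → (p.1, -1 / p.2) ∈ Ω →
      pd_t (fun q : ℝ × ℝ =>
          -q.2 * Real.log (u (q.1, -1 / q.2)) -
            2 * q.2 * (1 + Real.log (-1 / q.2))) p =
        Real.exp (pd_x (fun q : ℝ × ℝ =>
            -q.2 * Real.log (u (q.1, -1 / q.2)) -
              2 * q.2 * (1 + Real.log (-1 / q.2))) p) *
          pd_xx (fun q : ℝ × ℝ =>
            -q.2 * Real.log (u (q.1, -1 / q.2)) -
              2 * q.2 * (1 + Real.log (-1 / q.2))) p := by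
  rintro ⟨t, y⟩ hy hmem
  simp only at hy hmem
  have hy0 : y ≠ 0 := hy.ne
  have hx : 0 < -1 / y := hΩ' hmem
  have hslice : ∀ x, (t, x) ∈ Ω → ContDiffAt ℝ 2 (fun z => u (t, z)) x := fun x hxΩ =>
    (hu.contDiffAt (hΩ.mem_nhds hxΩ)).comp x (by fun_prop)
  have hderiv : ∀ x, (t, x) ∈ Ω →
      HasDerivAt (fun z => u (t, z)) (deriv (fun z => u (t, z)) x) x := fun x hxΩ =>
    ((hslice x hxΩ).differentiableAt (by norm_num)).hasDerivAt
  have hderiv2 : HasDerivAt (deriv fun z => u (t, z))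
      (deriv (deriv fun z => u (t, z)) (-1 / y)) (-1 / y) :=
    ((hslice _ hmem).derivWithin (m := 1) (by norm_num)).differentiableAt (by norm_num) |>.hasDerivAt
  have htime : HasDerivAt (fun s => u (s, -1 / y)) (pd_t u (t, -1 / y)) t := by
    have h : ContDiffAt ℝ 2 (fun s => u (s, -1 / y)) t :=
      (hu.contDiffAt (hΩ.mem_nhds hmem)).comp t (f := fun s => (s, -1 / y)) (by fun_prop)
    exact (h.differentiableAt (by norm_num)).hasDerivAt
  have hu0 : 0 < u (t, -1 / y) := hupos _ hmem
  have hvx : ∀ z, z ≠ 0 → (t, -1 / z) ∈ Ω → _ := fun z hz hzΩ =>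
    hasDerivAt_transform hz (hderiv _ hzΩ) (hupos _ hzΩ).ne'
  have hev : ∀ᶠ z in nhds y, z ≠ 0 ∧ (t, -1 / z) ∈ Ω := by
    have hc : ContinuousAt (fun z : ℝ => (t, -1 / z)) y :=
      continuousAt_const.prodMk (hasDerivAt_neg_one_div hy0).continuousAt
    exact (eventually_ne_nhds hy0).and (hc.eventually_mem (hΩ.mem_nhds hmem))
  have hvxx := (hasDerivAt_deriv_transform (f := fun z => u (t, z)) hy0 (hderiv _ hmem)
    hderiv2 hu0.ne').congr_of_eventuallyEq
      (hev.mono fun z hz => (hvx z hz.1 hz.2).deriv)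
  have hvt := ((htime.log hu0.ne').const_mul (-y)).sub_const
    (2 * y * (1 + Real.log (-1 / y)))
  have hpde := heq _ hmem
  have hexp : Real.exp (-Real.log (u (t, -1 / y)) +
      -1 / y * deriv (fun z => u (t, z)) (-1 / y) / u (t, -1 / y) - 2 * Real.log (-1 / y)) =
      Real.exp (-1 / y * deriv (fun z => u (t, z)) (-1 / y) / u (t, -1 / y)) * y ^ 2
        / u (t, -1 / y) := by
    rw [Real.exp_sub, Real.exp_add, Real.exp_neg, Real.exp_log hu0, two_mul, Real.exp_add,
      Real.exp_log hx]
    field_simp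
  unfold pd_t pd_x pd_xx
  simp only
  rw [hvt.deriv, (hvx y hy0 hmem).deriv, hvxx.deriv, hexp, hpde]
  simp only [pd_x, pd_xx]
  generalize Real.exp _ = E
  generalize u (t, -1 / y) = w at hu0 ⊢
  field_simp
  ring
end

section
/- Let Ω ⊆ ℝ² be open, let u : Ω → ℝ be twice continuously differentiable with u_x never zero on Ω, and suppose u_t = (u_x)⁻²·u_xx + (u_x)⁻¹ at every point of Ω. Fix ε ∈ ℝ and let Ω' = {(t,x) : e^{−x} + ε > 0 and (t, −ln(e^{−x}+ε)) ∈ Ω}. Then the function v(t,x) = u(t, −ln(e^{−x}+ε)) has v_x never zero on Ω' and satisfies v_t = (v_x)⁻²·v_xx + (v_x)⁻¹ at every point of Ω'. (This realizes the flow of the symmetry generator eˣ∂x from the five-dimensional maximal invariance algebra A₃.₇² (q=2) ⊕ ⟨∂x, eˣ∂x⟩ of this equation.) -/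
/-- The spatial slice of a `C²` function on an open set is `C²` at each point of the set. -/
theorem contDiffAt_slice {Ω : Set (ℝ × ℝ)} (hΩ : IsOpen Ω) {u : ℝ × ℝ → ℝ}
    (hu : ContDiffOn ℝ 2 u Ω) {t y : ℝ} (h : (t, y) ∈ Ω) :
    ContDiffAt ℝ 2 (fun z => u (t, z)) y :=
  (hu.contDiffAt (hΩ.mem_nhds h)).comp y (contDiffAt_const.prodMk contDiffAt_id)

/-- The first derivative of the flow map `x ↦ -log (exp (-x) + ε)`. -/
theorem hasDerivAt_expFlow {ε x : ℝ} (h : 0 < Real.exp (-x) + ε) :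
    HasDerivAt (fun y => -Real.log (Real.exp (-y) + ε))
      (Real.exp (-x) / (Real.exp (-x) + ε)) x := by
  have h1 : HasDerivAt (fun y => Real.exp (-y) + ε) (-Real.exp (-x)) x := by
    simpa using ((hasDerivAt_neg x).exp).add_const ε
  refine (h1.log h.ne').neg.congr_deriv ?_
  ring

/-- The second derivative of the flow map `x ↦ -log (exp (-x) + ε)`. -/
theorem hasDerivAt_deriv_expFlow {ε x : ℝ} (h : 0 < Real.exp (-x) + ε) :
    HasDerivAt (fun y => Real.exp (-y) / (Real.exp (-y) + ε))
      ((Real.exp (-x) / (Real.exp (-x) + ε)) ^ 2 - Real.exp (-x) / (Real.exp (-x) + ε)) x := by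
  have h1 : HasDerivAt (fun y => Real.exp (-y)) (-Real.exp (-x)) x := by
    simpa using (hasDerivAt_neg x).exp
  refine (h1.div (h1.add_const ε) h.ne').congr_deriv ?_
  field_simp
  ring

/-- Second-order chain rule in one variable. -/
theorem deriv_deriv_comp {f X dX : ℝ → ℝ} {ddX x : ℝ} (hf : ContDiffAt ℝ 2 f (X x))
    (hX : ∀ᶠ y in nhds x, HasDerivAt X (dX y) y) (hdX : HasDerivAt dX ddX x) :
    deriv (deriv (fun y => f (X y))) x =
      deriv (deriv f) (X x) * dX x ^ 2 + deriv f (X x) * ddX := by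
  have hXx : HasDerivAt X (dX x) x := hX.self_of_nhds
  have hd : ∀ᶠ z in nhds (X x), DifferentiableAt ℝ f z :=
    (hf.eventually (by simp)).mono fun z hz => hz.differentiableAt (by simp)
  have hev : deriv (fun y => f (X y)) =ᶠ[nhds x] fun y => deriv f (X y) * dX y := by
    filter_upwards [hX, hXx.continuousAt.eventually hd] with y hy hfy
    exact (hfy.hasDerivAt.comp y hy).deriv
  have hf' : DifferentiableAt ℝ (deriv f) (X x) :=
    (((hf.fderiv_right (m := 1) (by norm_num)).differentiableAt (by simp)).clm_apply
      (differentiableAt_const (1 : ℝ)) :)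
  rw [hev.deriv_eq]
  have := ((hf'.hasDerivAt.comp x hXx).mul hdX).deriv
  refine this.trans ?_
  simp only [Function.comp_apply]
  ring

/-- The flow of the symmetry generator `eˣ∂x` of `u_t = u_x⁻²u_xx + u_x⁻¹`:
if `u` solves the equation on `Ω` then `v(t,x) = u(t, −ln(e^{−x}+ε))`
solves it on `Ω'`. -/
theorem exp_flow_symmetry
    (Ω : Set (ℝ × ℝ)) (hΩ : IsOpen Ω)
    (u : ℝ × ℝ → ℝ) (hu : ContDiffOn ℝ 2 u Ω)
    (hux : ∀ p ∈ Ω, pd_x u p ≠ 0)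
    (heq : ∀ p ∈ Ω,
      pd_t u p = (pd_x u p) ^ (-2 : ℤ) * pd_xx u p + (pd_x u p)⁻¹)
    (ε : ℝ) :
    ∀ p : ℝ × ℝ, 0 < Real.exp (-p.2) + ε →
      (p.1, -Real.log (Real.exp (-p.2) + ε)) ∈ Ω →
      pd_x (fun q : ℝ × ℝ =>
          u (q.1, -Real.log (Real.exp (-q.2) + ε))) p ≠ 0 ∧
      pd_t (fun q : ℝ × ℝ =>
          u (q.1, -Real.log (Real.exp (-q.2) + ε))) p =
        (pd_x (fun q : ℝ × ℝ =>
            u (q.1, -Real.log (Real.exp (-q.2) + ε))) p) ^ (-2 : ℤ) *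
          pd_xx (fun q : ℝ × ℝ =>
            u (q.1, -Real.log (Real.exp (-q.2) + ε))) p +
        (pd_x (fun q : ℝ × ℝ =>
            u (q.1, -Real.log (Real.exp (-q.2) + ε))) p)⁻¹ := by
  rintro ⟨t, x⟩ hpos hmem
  dsimp only at hpos hmem
  have hf := contDiffAt_slice hΩ hu hmem
  have hev : ∀ᶠ y in nhds x, 0 < Real.exp (-y) + ε :=
    (by fun_prop : Continuous fun y => Real.exp (-y) + ε).continuousAt.eventually_const_lt hpos
  have hx : deriv (fun y => u (t, -Real.log (Real.exp (-y) + ε))) x =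
      deriv (fun z => u (t, z)) (-Real.log (Real.exp (-x) + ε)) *
        (Real.exp (-x) / (Real.exp (-x) + ε)) :=
    (HasDerivAt.comp (h₂ := fun z => u (t, z)) x (hf.differentiableAt (by simp)).hasDerivAt
      (hasDerivAt_expFlow hpos)).deriv
  have hxx := deriv_deriv_comp (X := fun y => -Real.log (Real.exp (-y) + ε)) hf
    (hev.mono fun y hy => hasDerivAt_expFlow hy) (hasDerivAt_deriv_expFlow hpos)
  have hne := hux _ hmem
  have he := heq _ hmem
  have hg : Real.exp (-x) / (Real.exp (-x) + ε) ≠ 0 := (div_pos (Real.exp_pos _) hpos).ne'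
  simp only [pd_t, pd_x, pd_xx] at hne he ⊢
  rw [hxx, hx, he]
  refine ⟨mul_ne_zero hne hg, ?_⟩
  generalize Real.exp (-x) / (Real.exp (-x) + ε) = g at hg ⊢
  generalize deriv (fun z => u (t, z)) (-Real.log (Real.exp (-x) + ε)) = a at hne ⊢
  simp only [zpow_neg, zpow_ofNat]
  field_simp
  ring
end

section
/- Let u : ℝ × (0,∞) → ℝ be twice continuously differentiable satisfying u_t = u_xx + x⁻¹·u·u_x − x⁻²·u² − 2x⁻²·u at every (t,x) with x > 0. Fix ε ∈ ℝ. Then the function v(t,x) = x·(u(t, x−ε) + 2)/(x−ε) − 2 satisfies v_t = v_xx + x⁻¹·v·v_x − x⁻²·v² − 2x⁻²·v at every (t,x) with x > 0 and x − ε > 0. (This realizes the flow of the symmetry generator ∂x + x⁻¹(u+2)∂u from the solvable radical L₂.₂ of the maximal invariance algebra sl(2,ℝ) ⋉ L₂.₂ of this equation.) -/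
/-- First derivative of the profile `z ↦ z (f (z - ε) + 2) / (z - ε) - 2`. -/
lemma hasDerivAt_translation_profile {f : ℝ → ℝ} {f' ε z : ℝ}
    (hf : HasDerivAt f f' (z - ε)) (hz : z - ε ≠ 0) :
    HasDerivAt (fun y => y * (f (y - ε) + 2) / (y - ε) - 2)
      ((f (z - ε) + 2 + z * f') / (z - ε) - z * (f (z - ε) + 2) / (z - ε) ^ 2) z := by
  have hs : HasDerivAt (fun y : ℝ => y - ε) 1 z := (hasDerivAt_id z).sub_const ε
  have hc : HasDerivAt (fun y => f (y - ε)) f' z := hf.comp_sub_const z ε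
  refine ((((hasDerivAt_id' z).mul (hc.add_const 2)).div hs hz).sub_const 2).congr_deriv ?_
  simp only [Pi.mul_apply]
  field_simp

/-- Second derivative of the profile `z ↦ z (f (z - ε) + 2) / (z - ε) - 2`. -/
lemma hasDerivAt_deriv_translation_profile {f : ℝ → ℝ} {f'' ε z : ℝ}
    (hf : ∀ᶠ y in nhds (z - ε), DifferentiableAt ℝ f y)
    (hf' : HasDerivAt (deriv f) f'' (z - ε)) (hz : z - ε ≠ 0) :
    HasDerivAt (deriv fun y => y * (f (y - ε) + 2) / (y - ε) - 2)
      ((2 * deriv f (z - ε) + z * f'') / (z - ε)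
        - 2 * (f (z - ε) + 2 + z * deriv f (z - ε)) / (z - ε) ^ 2
        + 2 * z * (f (z - ε) + 2) / (z - ε) ^ 3) z := by
  have hs : HasDerivAt (fun y : ℝ => y - ε) 1 z := (hasDerivAt_id z).sub_const ε
  have hc : HasDerivAt (fun y => f (y - ε)) (deriv f (z - ε)) z :=
    hf.self_of_nhds.hasDerivAt.comp_sub_const z ε
  have hc' : HasDerivAt (fun y => deriv f (y - ε)) f'' z := hf'.comp_sub_const z ε
  have hev : (deriv fun y => y * (f (y - ε) + 2) / (y - ε) - 2) =ᶠ[nhds z] fun y =>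
      (f (y - ε) + 2 + y * deriv f (y - ε)) / (y - ε)
        - y * (f (y - ε) + 2) / (y - ε) ^ 2 := by
    filter_upwards [hs.continuousAt.eventually hf, hs.continuousAt.eventually_ne hz]
      with y hy hy0
    exact (hasDerivAt_translation_profile hy.hasDerivAt hy0).deriv
  refine HasDerivAt.congr_of_eventuallyEq ?_ hev
  have hid := hasDerivAt_id' z
  refine ((((hc.add_const 2).add (hid.mul hc')).div hs hz).sub
    ((hid.mul (hc.add_const 2)).div (hs.pow 2) (pow_ne_zero 2 hz))).congr_deriv ?_
  simp only [Pi.mul_apply, Pi.add_apply, Pi.pow_apply]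
  field_simp
  push_cast
  ring

/-- The flow of the symmetry generator `∂x + x⁻¹(u+2)∂u` of
`u_t = u_xx + x⁻¹uu_x − x⁻²u² − 2x⁻²u`: if `u` is a solution for `x > 0`, then
`v(t,x) = x·(u(t,x−ε)+2)/(x−ε) − 2` is a solution for `x > 0`, `x − ε > 0`. -/
theorem translation_flow_symmetry_sl2_L22_first
    (u : ℝ × ℝ → ℝ) (hu : ContDiffOn ℝ 2 u {p : ℝ × ℝ | 0 < p.2})
    (heq : ∀ p : ℝ × ℝ, 0 < p.2 →
      pd_t u p = pd_xx u p + p.2⁻¹ * u p * pd_x u p -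
        p.2 ^ (-2 : ℤ) * (u p) ^ 2 - 2 * p.2 ^ (-2 : ℤ) * u p)
    (ε : ℝ) :
    ∀ p : ℝ × ℝ, 0 < p.2 → 0 < p.2 - ε →
      pd_t (fun q : ℝ × ℝ =>
          q.2 * (u (q.1, q.2 - ε) + 2) / (q.2 - ε) - 2) p =
        pd_xx (fun q : ℝ × ℝ =>
          q.2 * (u (q.1, q.2 - ε) + 2) / (q.2 - ε) - 2) p +
        p.2⁻¹ * ((fun q : ℝ × ℝ =>
            q.2 * (u (q.1, q.2 - ε) + 2) / (q.2 - ε) - 2) p) *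
          pd_x (fun q : ℝ × ℝ =>
            q.2 * (u (q.1, q.2 - ε) + 2) / (q.2 - ε) - 2) p -
        p.2 ^ (-2 : ℤ) * ((fun q : ℝ × ℝ =>
            q.2 * (u (q.1, q.2 - ε) + 2) / (q.2 - ε) - 2) p) ^ 2 -
        2 * p.2 ^ (-2 : ℤ) * ((fun q : ℝ × ℝ =>
            q.2 * (u (q.1, q.2 - ε) + 2) / (q.2 - ε) - 2) p) := by
  rintro ⟨t, x⟩ hx hy
  dsimp only at hx hy
  have hf : ContDiffOn ℝ 2 (fun y => u (t, y)) (Set.Ioi 0) :=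
    hu.comp (contDiff_const.prodMk contDiff_id).contDiffOn fun _ hz => hz
  have hdiff : ∀ᶠ y in nhds (x - ε), DifferentiableAt ℝ (fun y => u (t, y)) y := by
    filter_upwards [Ioi_mem_nhds hy] with y hy'
    exact (hf.differentiableOn two_ne_zero).differentiableAt (Ioi_mem_nhds hy')
  have hdiff' : DifferentiableAt ℝ (deriv fun y => u (t, y)) (x - ε) :=
    ((hf.deriv_of_isOpen (m := 1) isOpen_Ioi (by norm_num)).differentiableOn
      one_ne_zero).differentiableAt (Ioi_mem_nhds hy)
  have hv := hasDerivAt_translation_profile hdiff.self_of_nhds.hasDerivAt hy.ne'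
  have hv' := hasDerivAt_deriv_translation_profile hdiff hdiff'.hasDerivAt hy.ne'
  have ht : pd_t (fun q : ℝ × ℝ => q.2 * (u (q.1, q.2 - ε) + 2) / (q.2 - ε) - 2) (t, x) =
      x * pd_t u (t, x - ε) / (x - ε) := by
    simp only [pd_t, deriv_sub_const, deriv_div_const, deriv_const_mul_field, deriv_add_const]
  rw [ht, heq (t, x - ε) hy]
  simp only [pd_x, pd_xx]
  rw [hv.deriv, hv'.deriv]
  have hx0 := hx.ne'
  have hy0 := hy.ne'
  generalize deriv (deriv fun y => u (t, y)) (x - ε) = c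
  generalize deriv (fun y => u (t, y)) (x - ε) = b
  generalize u (t, x - ε) = a
  simp only [zpow_neg, zpow_ofNat]
  field_simp
  ring
end

section
/- Let u : ℝ × (0,∞) → ℝ be twice continuously differentiable satisfying u_t = u_xx + x⁻¹·u·u_x − x⁻²·u² − 2x⁻²·u at every (t,x) with x > 0. Fix ε ∈ ℝ. Then the function v(t,x) = x·( (u(t, x−εt) + 2)/(x−εt) − ε ) − 2 satisfies v_t = v_xx + x⁻¹·v·v_x − x⁻²·v² − 2x⁻²·v at every (t,x) with x > 0 and x − εt > 0. (This realizes the flow of the symmetry generator t∂x + [t·x⁻¹(u+2) − x]∂u from the solvable radical L₂.₂ of the maximal invariance algebra sl(2,ℝ) ⋉ L₂.₂ of this equation.) -/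
/-- Derivative of `y ↦ y ((g (y - c) + 2) / (y - c) - ε) - 2`. -/
theorem hasDerivAt_boost {g : ℝ → ℝ} {g' c ε y : ℝ} (hg : HasDerivAt g g' (y - c))
    (hy : y - c ≠ 0) :
    HasDerivAt (fun y => y * ((g (y - c) + 2) / (y - c) - ε) - 2)
      ((g (y - c) + 2) / (y - c) - ε +
        y * ((g' * (y - c) - (g (y - c) + 2)) / (y - c) ^ 2)) y := by
  have hz : HasDerivAt (fun y => y - c) 1 y := (hasDerivAt_id y).sub_const c
  have hgc : HasDerivAt (fun y => g (y - c)) g' y := hg.comp_sub_const y c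
  have h := ((hasDerivAt_id y).mul (((hgc.add_const 2).div hz hy).sub_const ε)).sub_const 2
  refine h.congr_deriv ?_
  simp

/-- Derivative of the first derivative given by `hasDerivAt_boost`. -/
theorem hasDerivAt_boost_deriv {g d : ℝ → ℝ} {g'' c ε y : ℝ}
    (hg : HasDerivAt g (d (y - c)) (y - c)) (hd : HasDerivAt d g'' (y - c)) (hy : y - c ≠ 0) :
    HasDerivAt (fun y => (g (y - c) + 2) / (y - c) - ε +
        y * ((d (y - c) * (y - c) - (g (y - c) + 2)) / (y - c) ^ 2))
      (2 * ((d (y - c) * (y - c) - (g (y - c) + 2)) / (y - c) ^ 2) +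
        y * (g'' / (y - c) - 2 * (d (y - c) * (y - c) - (g (y - c) + 2)) / (y - c) ^ 3)) y := by
  have hz : HasDerivAt (fun y => y - c) 1 y := (hasDerivAt_id y).sub_const c
  have hgc : HasDerivAt (fun y => g (y - c)) (d (y - c)) y := hg.comp_sub_const y c
  have hdc : HasDerivAt (fun y => d (y - c)) g'' y := hd.comp_sub_const y c
  have h := (((hgc.add_const 2).div hz hy).sub_const ε).add ((hasDerivAt_id y).mul
    (((hdc.mul hz).sub (hgc.add_const 2)).div (hz.pow 2) (pow_ne_zero 2 hy)))
  refine h.congr_deriv ?_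
  simp
  field_simp
  ring

/-- The flow of the symmetry generator `t∂x + [t·x⁻¹(u+2) − x]∂u` of
`u_t = u_xx + x⁻¹uu_x − x⁻²u² − 2x⁻²u`: if `u` is a solution for `x > 0`, then
`v(t,x) = x·((u(t,x−εt)+2)/(x−εt) − ε) − 2` is a solution for `x > 0`,
`x − εt > 0`. -/
theorem galilei_like_flow_symmetry_sl2_L22_second
    (u : ℝ × ℝ → ℝ) (hu : ContDiffOn ℝ 2 u {p : ℝ × ℝ | 0 < p.2})
    (heq : ∀ p : ℝ × ℝ, 0 < p.2 →
      pd_t u p = pd_xx u p + p.2⁻¹ * u p * pd_x u p -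
        p.2 ^ (-2 : ℤ) * (u p) ^ 2 - 2 * p.2 ^ (-2 : ℤ) * u p)
    (ε : ℝ) :
    ∀ p : ℝ × ℝ, 0 < p.2 → 0 < p.2 - ε * p.1 →
      pd_t (fun q : ℝ × ℝ =>
          q.2 * ((u (q.1, q.2 - ε * q.1) + 2) / (q.2 - ε * q.1) - ε) - 2) p =
        pd_xx (fun q : ℝ × ℝ =>
          q.2 * ((u (q.1, q.2 - ε * q.1) + 2) / (q.2 - ε * q.1) - ε) - 2) p +
        p.2⁻¹ * ((fun q : ℝ × ℝ =>
            q.2 * ((u (q.1, q.2 - ε * q.1) + 2) / (q.2 - ε * q.1) - ε) - 2) p) *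
          pd_x (fun q : ℝ × ℝ =>
            q.2 * ((u (q.1, q.2 - ε * q.1) + 2) / (q.2 - ε * q.1) - ε) - 2) p -
        p.2 ^ (-2 : ℤ) * ((fun q : ℝ × ℝ =>
            q.2 * ((u (q.1, q.2 - ε * q.1) + 2) / (q.2 - ε * q.1) - ε) - 2) p) ^ 2 -
        2 * p.2 ^ (-2 : ℤ) * ((fun q : ℝ × ℝ =>
            q.2 * ((u (q.1, q.2 - ε * q.1) + 2) / (q.2 - ε * q.1) - ε) - 2) p) := by
  rintro ⟨t, x⟩ hx hy
  simp only at hx hy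
  have hopen : IsOpen {p : ℝ × ℝ | 0 < p.2} := isOpen_lt continuous_const continuous_snd
  have hslice : ContDiffOn ℝ 2 (fun z => u (t, z)) (Set.Ioi 0) :=
    hu.comp (contDiff_const.prodMk contDiff_id).contDiffOn fun _ hz => hz
  have hg : ∀ z : ℝ, 0 < z → HasDerivAt (fun z => u (t, z)) (deriv (fun z => u (t, z)) z) z :=
    fun z hz => ((hslice.contDiffAt (Ioi_mem_nhds hz)).differentiableAt two_ne_zero).hasDerivAt
  have hd : HasDerivAt (deriv fun z => u (t, z)) (deriv (deriv fun z => u (t, z)) (x - ε * t))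
      (x - ε * t) :=
    (((hslice.deriv_of_isOpen (m := 1) isOpen_Ioi (by norm_num)).contDiffAt
      (Ioi_mem_nhds hy)).differentiableAt one_ne_zero).hasDerivAt
  have hL := ((hu.contDiffAt (hopen.mem_nhds (x := (t, x - ε * t)) hy)).differentiableAt
    two_ne_zero).hasFDerivAt
  set L := fderiv ℝ u (t, x - ε * t)
  have hut : deriv (fun s => u (s, x - ε * t)) t = L (1, 0) :=
    (hL.comp_hasDerivAt t ((hasDerivAt_id t).prodMk (hasDerivAt_const t (x - ε * t)))).deriv
  have hux : deriv (fun z => u (t, z)) (x - ε * t) = L (0, 1) :=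
    (hL.comp_hasDerivAt (x - ε * t)
      ((hasDerivAt_const (x - ε * t) t).prodMk (hasDerivAt_id (x - ε * t)))).deriv
  have hline : HasDerivAt (fun s => x - ε * s) (-ε) t := by
    simpa using ((hasDerivAt_id t).const_mul ε).const_sub x
  have hus : HasDerivAt (fun s => u (s, x - ε * s)) (L (1, 0) - ε * L (0, 1)) t := by
    refine (hL.comp_hasDerivAt t ((hasDerivAt_id t).prodMk hline)).congr_deriv ?_
    have : ((1 : ℝ), -ε) = (1, 0) - ε • (0, 1) := by ext <;> simp
    rw [this, map_sub, map_smul, smul_eq_mul]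
  have hvt : deriv (fun s => x * ((u (s, x - ε * s) + 2) / (x - ε * s) - ε) - 2) t = _ :=
    (((((hus.add_const 2).div hline hy.ne').sub_const ε).const_mul x).sub_const 2).deriv
  have hvx : deriv (fun y => y * ((u (t, y - ε * t) + 2) / (y - ε * t) - ε) - 2) x = _ :=
    (hasDerivAt_boost (ε := ε) (hg _ hy) hy.ne').deriv
  have hev : deriv (fun y => y * ((u (t, y - ε * t) + 2) / (y - ε * t) - ε) - 2) =ᶠ[nhds x]
      fun y => (u (t, y - ε * t) + 2) / (y - ε * t) - ε + y *
        ((deriv (fun z => u (t, z)) (y - ε * t) * (y - ε * t) - (u (t, y - ε * t) + 2)) /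
          (y - ε * t) ^ 2) := by
    filter_upwards [(isOpen_lt continuous_const
      (continuous_id.sub continuous_const)).mem_nhds (show x ∈ {y | 0 < y - ε * t} from hy)]
      with y hy
    exact (hasDerivAt_boost (ε := ε) (hg _ hy) (ne_of_gt hy)).deriv
  have hvxx := hev.deriv_eq.trans (hasDerivAt_boost_deriv (ε := ε) (hg _ hy) hd hy.ne').deriv
  have h := heq (t, x - ε * t) hy
  simp only [pd_t, pd_x, pd_xx] at h ⊢
  rw [hvxx, hvx, hvt]
  rw [hut] at h
  rw [h, hux]
  generalize deriv (deriv fun z => u (t, z)) (x - ε * t) = c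
  generalize L (0, 1) = b
  generalize u (t, x - ε * t) = w
  generalize x - ε * t = z at hy
  have hx' := hx.ne'
  have hz' := hy.ne'
  simp only [zpow_neg]
  norm_cast
  field_simp
  ring
end

section
/- Let λ ≠ 0 and γ be real constants, and let u : ℝ × (0,∞) → ℝ be twice continuously differentiable satisfying u_t = λ·(2u − x·u_x)·u_xx + (4γ − 4λ − 1)·x⁻²·u² + (1 + 2λ − 4γ)·x⁻¹·u·u_x + γ·(u_x)² at every (t,x) with x > 0. Then for every μ > 0, the function v(t,x) = μ²·u(t, x/μ) satisfies the same equation, v_t = λ·(2v − x·v_x)·v_xx + (4γ − 4λ − 1)·x⁻²·v² + (1 + 2λ − 4γ)·x⁻¹·v·v_x + γ·(v_x)², at every (t,x) with x > 0. (This realizes the symmetry x∂x + 2u∂u, which extends the sl(2,ℝ) invariance algebra of this equation to the four-dimensional algebra sl(2,ℝ) ⊕ ⟨x∂x + 2u∂u⟩.) -/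
/-- The derivative of `y ↦ c * f (y / μ)`, with no differentiability assumption on `f`. -/
theorem deriv_const_mul_comp_div (c μ : ℝ) (f : ℝ → ℝ) :
    deriv (fun y => c * f (y / μ)) = fun y => c / μ * deriv f (y / μ) := by
  funext y
  simp only [div_eq_inv_mul]
  rw [deriv_const_mul_field, deriv_comp_mul_left, smul_eq_mul]
  ring

theorem pd_t_scaling (c μ : ℝ) (u : ℝ × ℝ → ℝ) (p : ℝ × ℝ) :
    pd_t (fun q : ℝ × ℝ => c * u (q.1, q.2 / μ)) p = c * pd_t u (p.1, p.2 / μ) :=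
  deriv_const_mul_field c

theorem pd_x_scaling (c μ : ℝ) (u : ℝ × ℝ → ℝ) (p : ℝ × ℝ) :
    pd_x (fun q : ℝ × ℝ => c * u (q.1, q.2 / μ)) p = c / μ * pd_x u (p.1, p.2 / μ) :=
  congrFun (deriv_const_mul_comp_div c μ fun y => u (p.1, y)) p.2

theorem pd_xx_scaling (c μ : ℝ) (u : ℝ × ℝ → ℝ) (p : ℝ × ℝ) :
    pd_xx (fun q : ℝ × ℝ => c * u (q.1, q.2 / μ)) p =
      c / μ / μ * pd_xx u (p.1, p.2 / μ) := by
  simp only [pd_xx]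
  rw [deriv_const_mul_comp_div c μ fun y => u (p.1, y), deriv_const_mul_comp_div]

/-- The symmetry `x∂x + 2u∂u` of
`u_t = λ(2u − xu_x)u_xx + (4γ−4λ−1)x⁻²u² + (1+2λ−4γ)x⁻¹uu_x + γu_x²`:
if `u` is a solution for `x > 0`, then so is `v(t,x) = μ²·u(t, x/μ)`
for every `μ > 0`. -/
theorem scaling_symmetry_sl2_extension
    (lam γ : ℝ) (hlam : lam ≠ 0)
    (u : ℝ × ℝ → ℝ) (hu : ContDiffOn ℝ 2 u {p : ℝ × ℝ | 0 < p.2})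
    (heq : ∀ p : ℝ × ℝ, 0 < p.2 →
      pd_t u p = lam * (2 * u p - p.2 * pd_x u p) * pd_xx u p +
        (4 * γ - 4 * lam - 1) * p.2 ^ (-2 : ℤ) * (u p) ^ 2 +
        (1 + 2 * lam - 4 * γ) * p.2⁻¹ * u p * pd_x u p +
        γ * (pd_x u p) ^ 2)
    (μ : ℝ) (hμ : 0 < μ) :
    ∀ p : ℝ × ℝ, 0 < p.2 →
      pd_t (fun q : ℝ × ℝ => μ ^ 2 * u (q.1, q.2 / μ)) p =
        lam * (2 * ((fun q : ℝ × ℝ => μ ^ 2 * u (q.1, q.2 / μ)) p) -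
            p.2 * pd_x (fun q : ℝ × ℝ => μ ^ 2 * u (q.1, q.2 / μ)) p) *
          pd_xx (fun q : ℝ × ℝ => μ ^ 2 * u (q.1, q.2 / μ)) p +
        (4 * γ - 4 * lam - 1) * p.2 ^ (-2 : ℤ) *
          ((fun q : ℝ × ℝ => μ ^ 2 * u (q.1, q.2 / μ)) p) ^ 2 +
        (1 + 2 * lam - 4 * γ) * p.2⁻¹ *
          ((fun q : ℝ × ℝ => μ ^ 2 * u (q.1, q.2 / μ)) p) *
          pd_x (fun q : ℝ × ℝ => μ ^ 2 * u (q.1, q.2 / μ)) p +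
        γ * (pd_x (fun q : ℝ × ℝ => μ ^ 2 * u (q.1, q.2 / μ)) p) ^ 2 := by
  intro p hp
  rw [pd_t_scaling, pd_x_scaling, pd_xx_scaling, heq (p.1, p.2 / μ) (div_pos hp hμ)]
  have hμ0 : μ ≠ 0 := hμ.ne'
  have hp0 : p.2 ≠ 0 := hp.ne'
  simp only [zpow_neg, zpow_ofNat]
  field_simp
end
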